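/- arXiv:2303.10041 — 6 statements merged into one kernel-verified Lean document; each statement's English description precedes it below -/
import Mathlib

section
/- Let f ∈ C[-∞,∞] and a > 0. Then (i) lim_{x→+∞} ∫₀^x e^{−a(x−y)} f(y) dy = a⁻¹·lim_{y→+∞} f(y); (ii) for each sign, lim_{x→±∞} ∫_{−∞}^x e^{−a(x−y)} f(y) dy = a⁻¹·lim_{y→±∞} f(y); and (iii) for each sign, lim_{x→±∞} ∫_x^{+∞} e^{a(x−y)} f(y) dy = a⁻¹·lim_{y→±∞} f(y). -/
/-!
The substitutions `y = x - t` and `y = x + t` turn the three kinds of integrals into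
`∫ t in Ici 0, exp (-(a * t)) * g x t`, where `g x t` is `f (x - t)` or `f (x + t)` (cut off at
`t ≤ x` for the integral over `[0, x]`). A continuous function with finite limits at `±∞` is bounded
(`exists_bound_of_tendsto`), so `g` is bounded, and `g x t` tends to the limit of `f` for each
fixed `t`. Dominated convergence with dominating function `M * exp (-(a * t))`
(`tendsto_integral_exp_mul`) then gives the limit `L * ∫ t in Ici 0, exp (-(a * t)) = a⁻¹ * L`.
-/

open Filter Topology MeasureTheory Set intervalIntegral

noncomputable section

/-- `f` belongs to `C[-infty,infty]`: continuous with finite limits at both infinities. -/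
def Cinf (f : ℝ → ℝ) : Prop :=
  Continuous f ∧ (∃ L, Tendsto f atTop (nhds L)) ∧ (∃ L, Tendsto f atBot (nhds L))

/-- odd part of a function -/
def oddPart (f : ℝ → ℝ) : ℝ → ℝ := fun x => (f x - f (-x)) / 2

/-- even part of a function -/
def evenPart (f : ℝ → ℝ) : ℝ → ℝ := fun x => (f x + f (-x)) / 2

/-- the exponential function `e_a(x) = exp(-a x)` -/
def expa (a : ℝ) : ℝ → ℝ := fun x => Real.exp (-(a * x))

/-- the (signed) convolution `(f*g)(x) = ∫_0^x f(x-y) g(y) dy`, for all real `x` -/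
def conv (f g : ℝ → ℝ) : ℝ → ℝ := fun x => ∫ y in (0:ℝ)..x, f (x - y) * g y

/-- the basic cosine family `C(t)f(x) = (f(x+t)+f(x-t))/2` -/
def cosF (t : ℝ) (f : ℝ → ℝ) : ℝ → ℝ := fun x => (f (x + t) + f (x - t)) / 2

lemma exists_bound_of_tendsto {f : ℝ → ℝ} (hf : Continuous f) {Lp Lm : ℝ}
    (hLp : Tendsto f atTop (nhds Lp)) (hLm : Tendsto f atBot (nhds Lm)) :
    ∃ M, ∀ y, |f y| ≤ M := by
  obtain ⟨A, hA⟩ := eventually_atTop.1 (hLp.abs.eventually_le_const (lt_add_one |Lp|))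
  obtain ⟨B, hB⟩ := eventually_atBot.1 (hLm.abs.eventually_le_const (lt_add_one |Lm|))
  obtain ⟨C, hC⟩ := (isCompact_Icc (a := B) (b := A)).exists_bound_of_continuousOn hf.continuousOn
  refine ⟨max C (max (|Lp| + 1) (|Lm| + 1)), fun y => ?_⟩
  rcases le_total A y with h | h
  · exact (hA y h).trans (by simp)
  rcases le_total y B with h' | h'
  · exact (hB y h').trans (by simp)
  · exact (hC y ⟨h', h⟩).trans (by simp)

lemma integrableOn_exp_neg_mul {a : ℝ} (ha : 0 < a) :
    IntegrableOn (fun t : ℝ => Real.exp (-(a * t))) (Ici 0) := by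
  rw [integrableOn_Ici_iff_integrableOn_Ioi]
  simpa [neg_mul] using integrableOn_exp_mul_Ioi (neg_lt_zero.2 ha) 0

lemma integral_exp_neg_mul {a : ℝ} (ha : 0 < a) :
    ∫ t in Ici (0 : ℝ), Real.exp (-(a * t)) = a⁻¹ := by
  rw [integral_Ici_eq_integral_Ioi]
  simpa [neg_mul] using integral_exp_mul_Ioi (neg_lt_zero.2 ha) 0

/-- Dominated convergence against the exponential weight on the half-line. -/
lemma tendsto_integral_exp_mul {a : ℝ} (ha : 0 < a) {l : Filter ℝ} [l.IsCountablyGenerated]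
    {g : ℝ → ℝ → ℝ} {M L : ℝ} (hg : ∀ x, Measurable (g x)) (hM : ∀ x t, |g x t| ≤ M)
    (hlim : ∀ t, Tendsto (fun x => g x t) l (nhds L)) :
    Tendsto (fun x => ∫ t in Ici (0 : ℝ), Real.exp (-(a * t)) * g x t) l (nhds (a⁻¹ * L)) := by
  rw [← integral_exp_neg_mul ha, ← MeasureTheory.integral_mul_const]
  refine tendsto_integral_filter_of_dominated_convergence
    (fun t => Real.exp (-(a * t)) * M) ?_ ?_ ?_ ?_
  · refine Eventually.of_forall fun x => ?_
    have := hg x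
    exact Measurable.aestronglyMeasurable (by fun_prop)
  · refine Eventually.of_forall fun x => Eventually.of_forall fun t => ?_
    rw [norm_mul, Real.norm_eq_abs, Real.norm_eq_abs, Real.abs_exp]
    exact mul_le_mul_of_nonneg_left (hM x t) (Real.exp_pos _).le
  · exact (integrableOn_exp_neg_mul ha).mul_const M
  · exact Eventually.of_forall fun t => (hlim t).const_mul _

lemma integral_Iic_eq (a : ℝ) (f : ℝ → ℝ) (x : ℝ) :
    ∫ y in Iic x, Real.exp (-(a * (x - y))) * f y =
      ∫ t in Ici (0 : ℝ), Real.exp (-(a * t)) * f (x - t) := by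
  rw [← MeasureTheory.integral_indicator measurableSet_Iic,
    ← MeasureTheory.integral_indicator measurableSet_Ici,
    ← integral_sub_left_eq_self _ volume x]
  refine integral_congr_ae (Eventually.of_forall fun t => ?_)
  simp [indicator_apply]

lemma integral_Ici_eq (a : ℝ) (f : ℝ → ℝ) (x : ℝ) :
    ∫ y in Ici x, Real.exp (a * (x - y)) * f y =
      ∫ t in Ici (0 : ℝ), Real.exp (-(a * t)) * f (x + t) := by
  rw [← MeasureTheory.integral_indicator measurableSet_Ici,
    ← MeasureTheory.integral_indicator measurableSet_Ici,
    ← integral_add_left_eq_self _ x]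
  refine integral_congr_ae (Eventually.of_forall fun t => ?_)
  simp [indicator_apply]

lemma integral_zero_eq (a : ℝ) (f : ℝ → ℝ) {x : ℝ} (hx : 0 ≤ x) :
    ∫ y in (0:ℝ)..x, Real.exp (-(a * (x - y))) * f y =
      ∫ t in Ici (0 : ℝ), Real.exp (-(a * t)) * (Iic x).indicator (fun t => f (x - t)) t := by
  -- `Icc 0 x` is the form of the domain that reflects to itself under `y = x - t`.
  rw [intervalIntegral.integral_of_le hx, ← integral_Icc_eq_integral_Ioc,
    ← MeasureTheory.integral_indicator measurableSet_Icc,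
    ← MeasureTheory.integral_indicator measurableSet_Ici,
    ← integral_sub_left_eq_self _ volume x]
  refine integral_congr_ae (Eventually.of_forall fun t => ?_)
  by_cases h0 : 0 ≤ t <;> by_cases h1 : t ≤ x <;> simp [indicator_apply, h0, h1]

/-- de l'Hospital-type limits of exponential averages of `f ∈ C[-∞,∞]`. -/
theorem statement0 (a : ℝ) (ha : 0 < a) (f : ℝ → ℝ) (hf : Continuous f)
    (Lp Lm : ℝ) (hLp : Tendsto f atTop (nhds Lp)) (hLm : Tendsto f atBot (nhds Lm)) :
    Tendsto (fun x : ℝ => ∫ y in (0:ℝ)..x, Real.exp (-(a * (x - y))) * f y) atTop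
      (nhds (a⁻¹ * Lp)) ∧
    Tendsto (fun x : ℝ => ∫ y in Iic x, Real.exp (-(a * (x - y))) * f y) atTop
      (nhds (a⁻¹ * Lp)) ∧
    Tendsto (fun x : ℝ => ∫ y in Iic x, Real.exp (-(a * (x - y))) * f y) atBot
      (nhds (a⁻¹ * Lm)) ∧
    Tendsto (fun x : ℝ => ∫ y in Ici x, Real.exp (a * (x - y)) * f y) atTop
      (nhds (a⁻¹ * Lp)) ∧
    Tendsto (fun x : ℝ => ∫ y in Ici x, Real.exp (a * (x - y)) * f y) atBot
      (nhds (a⁻¹ * Lm)) := by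
  obtain ⟨M, hM⟩ := exists_bound_of_tendsto hf hLp hLm
  have hsub (x : ℝ) : Measurable fun t => f (x - t) := (hf.comp (by fun_prop)).measurable
  have hadd (x : ℝ) : Measurable fun t => f (x + t) := (hf.comp (by fun_prop)).measurable
  simp only [integral_Iic_eq, integral_Ici_eq]
  refine ⟨?_, ?_, ?_, ?_, ?_⟩
  · have key := tendsto_integral_exp_mul ha (l := atTop) (M := M) (L := Lp)
      (g := fun x => (Iic x).indicator fun t => f (x - t))
      (fun x => (hsub x).indicator measurableSet_Iic)
      (fun x t => (norm_indicator_le_norm_self (fun t => f (x - t)) t).trans (hM _)) ?_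
    · refine key.congr' ?_
      filter_upwards [eventually_ge_atTop 0] with x hx
      exact (integral_zero_eq a f hx).symm
    · intro t
      refine (hLp.comp (tendsto_atTop_add_const_right atTop (-t) tendsto_id)).congr' ?_
      filter_upwards [eventually_ge_atTop t] with x hx
      simp [indicator_apply, hx, sub_eq_add_neg]
  · exact tendsto_integral_exp_mul ha hsub (fun _ _ => hM _) fun t =>
      hLp.comp (tendsto_atTop_add_const_right atTop (-t) tendsto_id)
  · exact tendsto_integral_exp_mul ha hsub (fun _ _ => hM _) fun t =>
      hLm.comp (tendsto_atBot_add_const_right atBot (-t) tendsto_id)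
  · exact tendsto_integral_exp_mul ha hadd (fun _ _ => hM _) fun t =>
      hLp.comp (tendsto_atTop_add_const_right atTop t tendsto_id)
  · exact tendsto_integral_exp_mul ha hadd (fun _ _ => hM _) fun t =>
      hLm.comp (tendsto_atBot_add_const_right atBot t tendsto_id)
end
end

section
/- Let a > 0 and let φ : ℝ → ℝ be continuous. The following four conditions are equivalent: (a) φ^o(x) = a·(e_a * φ)(x) for all x ≥ 0; (b) φ^o = a·(e_a * φ) identically on ℝ; (c) the function e_a * φ is odd on ℝ; (d) for every t ∈ ℝ, C(t)(e_a * φ) = e_a * (C(t)φ) identically on ℝ. -/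
/-!
Write `G = e_a * φ` and `K t = G t + G (-t)`. Since `G x = e^{-ax} ∫₀ˣ e^{ay} φ(y) dy`, the function `G`
solves `G' = φ - a G` with `G 0 = 0` (`hasDerivAt_conv_expa`). All four conditions say that `K`
vanishes.

* If `G` is odd, then `G'` is even, and comparing `φ - a G` at `x` and `-x` gives `φ^o = a G`.
* If `φ^o = a G` on `[0, ∞)`, then `K' = a K` there and `K 0 = 0`, so `e^{-ax} K x` is constantly
  zero on `[0, ∞)`; as `K` is even, it vanishes everywhere (`conv_expa_odd_of_nonneg`).
* A shift of the integration variable gives `e_a * (C(t)φ) = C(t)G - e^{-ax} K(t) / 2`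
  (`conv_expa_cosF`), so the cosine family commutes with `e_a * ·` at `φ` iff `K = 0`.
-/

open Filter Topology MeasureTheory Set intervalIntegral

noncomputable section

theorem conv_expa_eq (a : ℝ) (φ : ℝ → ℝ) (x : ℝ) :
    conv (expa a) φ x = Real.exp (-(a * x)) * ∫ y in (0:ℝ)..x, Real.exp (a * y) * φ y := by
  unfold conv expa
  rw [← intervalIntegral.integral_const_mul]
  congr 1
  ext y
  rw [← mul_assoc, ← Real.exp_add]
  ring_nf

theorem conv_expa_zero (a : ℝ) (φ : ℝ → ℝ) : conv (expa a) φ 0 = 0 := by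
  simp [conv]

theorem hasDerivAt_conv_expa (a : ℝ) {φ : ℝ → ℝ} (hφ : Continuous φ) (x : ℝ) :
    HasDerivAt (conv (expa a) φ) (φ x - a * conv (expa a) φ x) x := by
  have hc : Continuous fun y => Real.exp (a * y) * φ y := by fun_prop
  have h1 : HasDerivAt (fun x => ∫ y in (0:ℝ)..x, Real.exp (a * y) * φ y)
      (Real.exp (a * x) * φ x) x := hc.integral_hasStrictDerivAt 0 x |>.hasDerivAt
  have h2 : HasDerivAt (fun x : ℝ => Real.exp (-(a * x))) (Real.exp (-(a * x)) * (-(a * 1))) x :=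
    (((hasDerivAt_id x).const_mul a).neg).exp
  have h3 := h2.mul h1
  rw [funext (conv_expa_eq a φ)]
  refine h3.congr_deriv ?_
  have he : Real.exp (-(a * x)) * Real.exp (a * x) = 1 := by
    rw [← Real.exp_add]; simp
  linear_combination φ x * he

theorem hasDerivAt_conv_expa_neg (a : ℝ) {φ : ℝ → ℝ} (hφ : Continuous φ) (x : ℝ) :
    HasDerivAt (fun y => conv (expa a) φ (-y)) (-(φ (-x) - a * conv (expa a) φ (-x))) x := by
  have h := (hasDerivAt_conv_expa a hφ (-x)).comp x (hasDerivAt_neg x)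
  exact h.congr_deriv (by ring)

theorem conv_expa_odd_of_nonneg {a : ℝ} {φ : ℝ → ℝ} (hφ : Continuous φ)
    (h : ∀ x : ℝ, 0 ≤ x → oddPart φ x = a * conv (expa a) φ x) (x : ℝ) :
    conv (expa a) φ (-x) = -conv (expa a) φ x := by
  have hd : ∀ x : ℝ, 0 ≤ x → HasDerivAt
      (fun y => Real.exp (-(a * y)) * (conv (expa a) φ y + conv (expa a) φ (-y))) 0 x := by
    intro x hx
    have h2 : HasDerivAt (fun x : ℝ => Real.exp (-(a * x)))
        (Real.exp (-(a * x)) * (-(a * 1))) x :=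
      (((hasDerivAt_id x).const_mul a).neg).exp
    have h3 := h2.mul ((hasDerivAt_conv_expa a hφ x).add (hasDerivAt_conv_expa_neg a hφ x))
    refine h3.congr_deriv ?_
    have hx' := h x hx
    simp only [oddPart] at hx'
    simp only [Pi.add_apply]
    linear_combination 2 * Real.exp (-(a * x)) * hx'
  have key : ∀ x : ℝ, 0 ≤ x → conv (expa a) φ x + conv (expa a) φ (-x) = 0 := by
    intro x hx
    have hconst := constant_of_has_deriv_right_zero (a := 0) (b := x)
      (fun y hy => (hd y hy.1).continuousAt.continuousWithinAt)
      (fun y hy => (hd y hy.1).hasDerivWithinAt) x ⟨hx, le_rfl⟩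
    simpa [conv_expa_zero, (Real.exp_pos _).ne'] using hconst
  rcases le_total 0 x with hx | hx
  · linarith [key x hx]
  · have := key (-x) (by linarith)
    rw [neg_neg] at this
    linarith

theorem conv_expa_shift (a : ℝ) {φ : ℝ → ℝ} (hφ : Continuous φ) (t x : ℝ) :
    conv (expa a) (fun y => φ (y + t)) x =
      conv (expa a) φ (x + t) - Real.exp (-(a * x)) * conv (expa a) φ t := by
  have hc : Continuous fun y => Real.exp (a * y) * φ y := by fun_prop
  have hi : ∀ u v : ℝ, IntervalIntegrable (fun y => Real.exp (a * y) * φ y) volume u v :=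
    fun u v => hc.intervalIntegrable u v
  have h1 : (∫ y in (0:ℝ)..x, Real.exp (a * y) * φ (y + t)) =
      Real.exp (-(a * t)) * ∫ y in t..(x + t), Real.exp (a * y) * φ y := by
    have := intervalIntegral.integral_comp_add_right (a := 0) (b := x)
      (fun y => Real.exp (a * y) * φ y) t
    rw [zero_add] at this
    rw [← this, ← intervalIntegral.integral_const_mul]
    congr 1
    ext y
    rw [← mul_assoc, ← Real.exp_add]
    ring_nf
  have h2 := intervalIntegral.integral_add_adjacent_intervals (hi 0 t) (hi t (x + t))
  have he : Real.exp (-(a * (x + t))) = Real.exp (-(a * x)) * Real.exp (-(a * t)) := by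
    rw [← Real.exp_add]; ring_nf
  rw [conv_expa_eq, conv_expa_eq, conv_expa_eq, h1, ← h2, he]
  ring

/-- The defect in the commutation of `C(t)` with `e_a * ·` is a multiple of the even part of
`e_a * φ` at `t`. -/
theorem conv_expa_cosF (a : ℝ) {φ : ℝ → ℝ} (hφ : Continuous φ) (t x : ℝ) :
    conv (expa a) (cosF t φ) x = cosF t (conv (expa a) φ) x -
      Real.exp (-(a * x)) * ((conv (expa a) φ t + conv (expa a) φ (-t)) / 2) := by
  have h1 := conv_expa_shift a hφ t x
  have h2 := conv_expa_shift a hφ (-t) x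
  have h3 : conv (expa a) (cosF t φ) x =
      (conv (expa a) (fun y => φ (y + t)) x + conv (expa a) (fun y => φ (y + -t)) x) / 2 := by
    simp only [conv]
    rw [← intervalIntegral.integral_add, ← intervalIntegral.integral_div]
    · congr 1
      ext y
      simp only [cosF, sub_eq_add_neg]
      ring
    all_goals
      apply Continuous.intervalIntegrable
      unfold expa
      fun_prop
  rw [h3, h1, h2]
  simp only [cosF, sub_eq_add_neg]
  ring

/-- four equivalent conditions on a continuous `φ`. -/
theorem statement1 (a : ℝ) (ha : 0 < a) (φ : ℝ → ℝ) (hφ : Continuous φ) :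
    List.TFAE
      [ ∀ x : ℝ, 0 ≤ x → oddPart φ x = a * conv (expa a) φ x,
        ∀ x : ℝ, oddPart φ x = a * conv (expa a) φ x,
        ∀ x : ℝ, conv (expa a) φ (-x) = -conv (expa a) φ x,
        ∀ t x : ℝ, cosF t (conv (expa a) φ) x = conv (expa a) (cosF t φ) x ] := by
  tfae_have 2 → 1 := fun h x _ => h x
  tfae_have 1 → 3 := fun h => conv_expa_odd_of_nonneg hφ h
  tfae_have 3 → 2 := by
    intro h x
    -- The function `y ↦ G (-y)` equals `-G`; its two derivatives at `x` must agree.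
    have h1 := hasDerivAt_conv_expa_neg a hφ x
    have h2 : HasDerivAt (fun y => conv (expa a) φ (-y)) (-(φ x - a * conv (expa a) φ x)) x := by
      rw [funext h]
      exact (hasDerivAt_conv_expa a hφ x).neg
    have h3 := h1.unique h2
    rw [h x] at h3
    simp only [oddPart]
    linarith
  tfae_have 3 → 4 := by
    intro h t x
    rw [conv_expa_cosF a hφ, h t]
    ring
  tfae_have 4 → 3 := by
    intro h t
    have h1 := h t 0
    rw [conv_expa_cosF a hφ, mul_zero, neg_zero, Real.exp_zero] at h1
    linarith
  tfae_finish
end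
end

section
/- Fix α, β ≥ 0 with α + β > 0. The extension operator E_{α,β} is a linear bijection from 𝔛 onto 𝒞_{α,β}. Precisely: (i) for every f ∈ 𝔛 the pair E_{α,β}f = (f̃_ℓ, f̃_r) belongs to 𝒞_{α,β} (in particular f̃_ℓ and f̃_r are continuous on ℝ and have finite limits at ±∞); (ii) ‖E_{α,β} f‖ ≤ (1 + 4·max(α,β)/(α+β))·‖f‖_∞ ≤ 5‖f‖_∞; (iii) R(E_{α,β} f) = f for every f ∈ 𝔛, and E_{α,β}(R(ψ₁,ψ₂)) = (ψ₁,ψ₂) for every (ψ₁,ψ₂) ∈ 𝒞_{α,β}. -/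
/-!
Write `a = α + β` and let `P`, `M` be the continuous extensions of `f|_(0,∞)`, `f|_(-∞,0)` to `ℝ`
that are constant beyond `0` (`glueR`, `glueL`). Put `G(y) = P(y) - M(-y)` and let
`J(x) = e^{-a x} ∫₀^x e^{a y} G(y) dy` (`kern`), so that `J' = G - a J`, `J(0) = 0`. Then
`f̃_ℓ(x) = M(-|x|) + 2 α J(x⁺)` and `f̃_r(x) = P(|x|) - 2 β J(x⁻)` (`extL_eq`, `extR_eq`).
Continuity is immediate from these formulas. The limits at infinity follow from
`J(x) → G(∞) / a` (dominated convergence, `kern_tendsto`), and the norm estimate from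
`|J(x)| ≤ sup |G| / a` for `x ≥ 0` (`kern_bound`).

The two defining identities of `𝒞_{α,β}` reduce to the claim that the convolution of `e_a` with
`h(y) = f̃_r(y) - f̃_ℓ(-y)` equals `J(x)` for `x ≥ 0` and `-J(-x)` for `x ≤ 0`. The first holds since
`h = G` on `[0,∞)`; on `(-∞,0]` one has `h(y) = G(-y) - 2 a J(-y)`, and `e^{a y} h(y)` is exactly the
derivative of `-e^{a y} J(-y)` (`integral_neg_side`).

That `E ∘ R` is the identity on `𝒞_{α,β}` is a direct rewriting of the defining identities.
-/

open Filter Topology MeasureTheory Set intervalIntegral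

noncomputable section

/-- membership in the invariant subspace `𝒞_{α,β}` of `𝒞 = C[-∞,∞] × C[-∞,∞]` -/
def memCab (α β : ℝ) (ψ₁ ψ₂ : ℝ → ℝ) : Prop :=
  Cinf ψ₁ ∧ Cinf ψ₂ ∧
  (∀ x, oddPart ψ₁ x = α * conv (expa (α + β)) (fun y => ψ₂ y - ψ₁ (-y)) x) ∧
  (∀ x, oddPart ψ₂ x = β * conv (expa (α + β)) (fun y => ψ₂ y - ψ₁ (-y)) x)

/-- membership in `𝔛`: functions on `ℝ \\ {0}` (the value at `0` is irrelevant), continuous on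
both open half-lines, with finite one-sided limits at `0` and finite limits at `±∞`. -/
def memX (f : ℝ → ℝ) : Prop :=
  ContinuousOn f (Iio 0) ∧ ContinuousOn f (Ioi 0) ∧
  (∃ L, Tendsto f (nhdsWithin 0 (Iio 0)) (nhds L)) ∧
  (∃ L, Tendsto f (nhdsWithin 0 (Ioi 0)) (nhds L)) ∧
  (∃ L, Tendsto f atTop (nhds L)) ∧ (∃ L, Tendsto f atBot (nhds L))

/-- supremum norm on `𝔛` (the point `0` does not count) -/
def Xnorm (f : ℝ → ℝ) : ℝ := ⨆ x : {y : ℝ // y ≠ 0}, |f x.1|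

/-- supremum norm on `C[-∞,∞]` -/
def Cnorm (f : ℝ → ℝ) : ℝ := ⨆ x : ℝ, |f x|

/-- the restriction operator `R : 𝒞 → 𝔛` -/
def restr (ψ₁ ψ₂ : ℝ → ℝ) : ℝ → ℝ := fun x => if x < 0 then ψ₁ x else ψ₂ x

/-- the extension `f̃_ℓ` of the left part of `f ∈ 𝔛`; `fm` is the one-sided limit `f(0-)` -/
def extL (α β : ℝ) (f : ℝ → ℝ) (fm : ℝ) : ℝ → ℝ := fun x =>
  if x < 0 then f x
  else if x = 0 then fm
  else f (-x) + 2 * α * ∫ y in (0:ℝ)..x, Real.exp (-((α + β) * (x - y))) * (f y - f (-y))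

/-- the extension `f̃_r` of the right part of `f ∈ 𝔛`; `fp` is the one-sided limit `f(0+)` -/
def extR (α β : ℝ) (f : ℝ → ℝ) (fp : ℝ) : ℝ → ℝ := fun x =>
  if 0 < x then f x
  else if x = 0 then fp
  else f (-x) - 2 * β * ∫ y in (0:ℝ)..(-x), Real.exp (-((α + β) * (-x - y))) * (f y - f (-y))

/-- The extension of `f|_(0,∞)` to `ℝ` by the constant `c`; continuous for `c = f(0+)`. -/
def glueR (f : ℝ → ℝ) (c : ℝ) : ℝ → ℝ := fun x => if 0 < x then f x else c

/-- The extension of `f|_(-∞,0)` to `ℝ` by the constant `c`; continuous for `c = f(0-)`. -/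
def glueL (f : ℝ → ℝ) (c : ℝ) : ℝ → ℝ := fun x => if x < 0 then f x else c

/-- The convolution `e_a * G` with the factor `e^{-a x}` pulled out of the integral; it is the
solution of `J' = G - a J`, `J(0) = 0`. -/
def kern (a : ℝ) (G : ℝ → ℝ) : ℝ → ℝ :=
  fun x => Real.exp (-(a * x)) * ∫ y in (0:ℝ)..x, Real.exp (a * y) * G y

lemma glueR_of_pos {f : ℝ → ℝ} {c x : ℝ} (h : 0 < x) : glueR f c x = f x := if_pos h

lemma glueL_of_neg {f : ℝ → ℝ} {c x : ℝ} (h : x < 0) : glueL f c x = f x := if_pos h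

lemma glueR_continuous {f : ℝ → ℝ} {c : ℝ} (hf : ContinuousOn f (Ioi 0))
    (hc : Tendsto f (𝓝[>] 0) (𝓝 c)) : Continuous (glueR f c) := by
  rw [continuous_iff_continuousAt]
  intro x
  rcases lt_trichotomy x 0 with hx | rfl | hx
  · refine (continuousAt_const (y := c)).congr ?_
    filter_upwards [Iio_mem_nhds hx] with y hy
    simp [glueR, not_lt.mpr (le_of_lt (mem_Iio.mp hy))]
  · rw [continuousAt_iff_continuous_left'_right']
    have h0 : glueR f c 0 = c := by simp [glueR]
    constructor
    · refine Tendsto.congr' ?_ (h0 ▸ tendsto_const_nhds (x := c))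
      filter_upwards [self_mem_nhdsWithin] with y hy
      simp [glueR, not_lt.mpr (le_of_lt (mem_Iio.mp hy))]
    · unfold ContinuousWithinAt
      rw [h0]
      refine Tendsto.congr' ?_ hc
      filter_upwards [self_mem_nhdsWithin] with y hy
      exact (glueR_of_pos hy).symm
  · refine (hf.continuousAt (Ioi_mem_nhds hx)).congr ?_
    filter_upwards [Ioi_mem_nhds hx] with y hy
    exact (glueR_of_pos hy).symm

lemma glueL_eq (f : ℝ → ℝ) (c : ℝ) : glueL f c = fun x => glueR (fun y => f (-y)) c (-x) := by
  funext x
  simp [glueL, glueR]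

lemma glueL_continuous {f : ℝ → ℝ} {c : ℝ} (hf : ContinuousOn f (Iio 0))
    (hc : Tendsto f (𝓝[<] 0) (𝓝 c)) : Continuous (glueL f c) := by
  rw [glueL_eq]
  refine (glueR_continuous ?_ ?_).comp continuous_neg
  · exact hf.comp continuousOn_neg (fun x hx => by simpa using hx)
  · have h : Tendsto (fun y : ℝ => -y) (𝓝[>] 0) (𝓝[<] 0) := by
      simpa using tendsto_neg_nhdsGT (a := (0:ℝ))
    exact hc.comp h

lemma kern_zero (a : ℝ) (G : ℝ → ℝ) : kern a G 0 = 0 := by simp [kern]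

lemma kern_eq (a : ℝ) (G : ℝ → ℝ) (x : ℝ) :
    kern a G x = ∫ y in (0:ℝ)..x, Real.exp (-(a * (x - y))) * G y := by
  unfold kern
  rw [← intervalIntegral.integral_const_mul]
  congr 1
  funext y
  rw [← mul_assoc, ← Real.exp_add]
  congr 2
  ring

lemma kern_hasDerivAt {a : ℝ} {G : ℝ → ℝ} (hG : Continuous G) (x : ℝ) :
    HasDerivAt (kern a G) (G x - a * kern a G x) x := by
  have h1 : HasDerivAt (fun x : ℝ => Real.exp (-(a * x))) (Real.exp (-(a * x)) * (-(a * 1))) x :=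
    (((hasDerivAt_id x).const_mul a).neg).exp
  have hc : Continuous fun y => Real.exp (a * y) * G y := by fun_prop
  have h2 : HasDerivAt (fun x => ∫ y in (0:ℝ)..x, Real.exp (a * y) * G y)
      (Real.exp (a * x) * G x) x :=
    integral_hasDerivAt_right (hc.intervalIntegrable _ _)
      hc.stronglyMeasurable.stronglyMeasurableAtFilter hc.continuousAt
  have h3 := h1.mul h2
  have e : Real.exp (-(a * x)) * Real.exp (a * x) = 1 := by
    rw [← Real.exp_add]; simp
  refine h3.congr_deriv ?_
  unfold kern
  linear_combination (G x) * e

lemma kern_continuous {a : ℝ} {G : ℝ → ℝ} (hG : Continuous G) : Continuous (kern a G) :=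
  continuous_iff_continuousAt.mpr fun x => (kern_hasDerivAt hG x).continuousAt

lemma kern_bound {a : ℝ} (ha : 0 < a) {G : ℝ → ℝ} {B : ℝ} (hB : 0 ≤ B)
    (hG : ∀ y, |G y| ≤ B) {x : ℝ} (hx : 0 ≤ x) : |kern a G x| ≤ B / a := by
  unfold kern
  rw [abs_mul, abs_of_pos (Real.exp_pos _)]
  have h1 : |∫ y in (0:ℝ)..x, Real.exp (a * y) * G y| ≤
      ∫ y in (0:ℝ)..x, Real.exp (a * y) * B := by
    rw [← Real.norm_eq_abs]
    refine norm_integral_le_of_norm_le hx ?_ ?_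
    · refine ae_of_all _ fun y _ => ?_
      rw [Real.norm_eq_abs, abs_mul, abs_of_pos (Real.exp_pos _)]
      exact mul_le_mul_of_nonneg_left (hG y) (Real.exp_pos _).le
    · exact Continuous.intervalIntegrable (by fun_prop) _ _
  have h2 : ∫ y in (0:ℝ)..x, Real.exp (a * y) * B = (Real.exp (a * x) - 1) / a * B := by
    rw [intervalIntegral.integral_mul_const, intervalIntegral.integral_comp_mul_left _ ha.ne']
    rw [integral_exp, mul_zero, Real.exp_zero, smul_eq_mul]
    ring
  have e : Real.exp (-(a * x)) * Real.exp (a * x) = 1 := by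
    rw [← Real.exp_add]; simp
  calc _ ≤ Real.exp (-(a * x)) * ((Real.exp (a * x) - 1) / a * B) :=
        mul_le_mul_of_nonneg_left (h2 ▸ h1) (Real.exp_pos _).le
    _ = (1 - Real.exp (-(a * x))) * (B / a) := by linear_combination (B / a) * e
    _ ≤ 1 * (B / a) := by
        refine mul_le_mul_of_nonneg_right ?_ (by positivity)
        linarith [Real.exp_pos (-(a * x))]
    _ = B / a := one_mul _

/-- If `G` has a limit at `+∞`, so does `e_a * G`: substitute `u = x - y` and use dominated
convergence for `∫₀^∞ e^{-a u} G(x - u) 1_{u ≤ x} du`. -/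
lemma kern_tendsto {a : ℝ} (ha : 0 < a) {G : ℝ → ℝ} (hGc : Continuous G) {B : ℝ}
    (hG : ∀ y, |G y| ≤ B) {L : ℝ} (hL : Tendsto G atTop (𝓝 L)) :
    ∃ l, Tendsto (kern a G) atTop (𝓝 l) := by
  refine ⟨∫ u in Ioi (0:ℝ), Real.exp (-(a * u)) * L, ?_⟩
  have key : ∀ x : ℝ, 0 ≤ x → (∫ u in Ioi (0:ℝ),
      (Iic x).indicator (fun u => Real.exp (-(a * u)) * G (x - u)) u) = kern a G x := by
    intro x hx
    rw [setIntegral_indicator measurableSet_Iic, Ioi_inter_Iic,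
      ← intervalIntegral.integral_of_le hx, kern_eq]
    have := intervalIntegral.integral_comp_sub_left (a := 0) (b := x)
      (fun y => Real.exp (-(a * (x - y))) * G y) x
    simpa using this
  refine Tendsto.congr' ((eventually_ge_atTop 0).mono key) ?_
  refine tendsto_integral_filter_of_dominated_convergence
    (fun u => Real.exp (-a * u) * B) ?_ ?_ ?_ ?_
  · refine Eventually.of_forall fun x => ?_
    refine AEStronglyMeasurable.indicator ?_ measurableSet_Iic
    exact Continuous.aestronglyMeasurable (by fun_prop)
  · refine Eventually.of_forall fun x => ae_of_all _ fun u => ?_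
    refine (norm_indicator_le_norm_self _ _).trans ?_
    rw [Real.norm_eq_abs, abs_mul, abs_of_pos (Real.exp_pos _), neg_mul]
    exact mul_le_mul_of_nonneg_left (hG _) (Real.exp_pos _).le
  · exact (exp_neg_integrableOn_Ioi 0 ha).mul_const B
  · refine ae_of_all _ fun u => ?_
    have h1 : Tendsto (fun x => Real.exp (-(a * u)) * G (x - u)) atTop
        (𝓝 (Real.exp (-(a * u)) * L)) :=
      (hL.comp (tendsto_atTop_add_const_right _ (-u) tendsto_id)).const_mul _
    refine h1.congr' ?_
    filter_upwards [eventually_ge_atTop u] with x hx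
    rw [indicator_of_mem (mem_Iic.mpr hx)]

/-- On the negative half-line `e^{a y} h(y)` has the antiderivative `-e^{a y} J(-y)`. -/
lemma integral_neg_side {a : ℝ} {G : ℝ → ℝ} (hG : Continuous G) (x : ℝ) :
    ∫ y in (0:ℝ)..x, Real.exp (a * y) * (G (-y) - 2 * a * kern a G (-y)) =
      -(Real.exp (a * x) * kern a G (-x)) := by
  have hk := kern_continuous (a := a) hG
  have hd : ∀ y ∈ uIcc 0 x, HasDerivAt (fun y => -(Real.exp (a * y) * kern a G (-y)))
      (Real.exp (a * y) * (G (-y) - 2 * a * kern a G (-y))) y := by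
    intro y _
    have h1 : HasDerivAt (fun y : ℝ => Real.exp (a * y)) (Real.exp (a * y) * (a * 1)) y :=
      ((hasDerivAt_id y).const_mul a).exp
    have h2 : HasDerivAt (fun y => kern a G (-y)) ((G (-y) - a * kern a G (-y)) * (-1)) y :=
      (kern_hasDerivAt hG (-y)).comp y (hasDerivAt_neg y)
    refine (h1.mul h2).neg.congr_deriv ?_
    ring
  rw [integral_eq_sub_of_hasDerivAt hd (Continuous.intervalIntegrable (by fun_prop) _ _)]
  simp [kern_zero]

lemma ext_integral_eq {a : ℝ} {f : ℝ → ℝ} {fm fp x : ℝ} (hx : 0 ≤ x) :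
    ∫ y in (0:ℝ)..x, Real.exp (-(a * (x - y))) * (f y - f (-y)) =
      kern a (fun y => glueR f fp y - glueL f fm (-y)) x := by
  rw [kern_eq]
  refine integral_congr_ae (ae_of_all _ fun y hy => ?_)
  rw [uIoc_of_le hx] at hy
  rw [glueR_of_pos hy.1, glueL_of_neg (neg_lt_zero.mpr hy.1)]

lemma extL_eq (α β : ℝ) (f : ℝ → ℝ) (fm fp : ℝ) (x : ℝ) :
    extL α β f fm x = glueL f fm (-|x|) +
      2 * α * kern (α + β) (fun y => glueR f fp y - glueL f fm (-y)) (max x 0) := by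
  unfold extL
  rcases lt_trichotomy x 0 with hx | rfl | hx
  · rw [if_pos hx, abs_of_neg hx, max_eq_right hx.le, kern_zero, neg_neg, glueL_of_neg hx]
    ring
  · simp [kern_zero, glueL]
  · rw [if_neg hx.not_gt, if_neg hx.ne', abs_of_pos hx, max_eq_left hx.le,
      glueL_of_neg (neg_lt_zero.mpr hx), ext_integral_eq hx.le]

lemma extR_eq (α β : ℝ) (f : ℝ → ℝ) (fm fp : ℝ) (x : ℝ) :
    extR α β f fp x = glueR f fp |x| -
      2 * β * kern (α + β) (fun y => glueR f fp y - glueL f fm (-y)) (max (-x) 0) := by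
  unfold extR
  rcases lt_trichotomy x 0 with hx | rfl | hx
  · rw [if_neg hx.not_gt, if_neg hx.ne, abs_of_neg hx, max_eq_left (by linarith),
      glueR_of_pos (by linarith), ext_integral_eq (by linarith : 0 ≤ -x)]
  · simp [kern_zero, glueR]
  · rw [if_pos hx, abs_of_pos hx, max_eq_right (by linarith), kern_zero, glueR_of_pos hx]
    ring

lemma exists_bound_of_tendsto_s4 {g : ℝ → ℝ} (hg : Continuous g) {L : ℝ}
    (hL : Tendsto g atTop (𝓝 L)) : ∃ B, ∀ x, 0 ≤ x → |g x| ≤ B := by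
  obtain ⟨A, hA⟩ := eventually_atTop.mp (hL.abs.eventually_le_const (lt_add_one |L|))
  obtain ⟨C, hC⟩ := (isCompact_Icc (a := (0:ℝ)) (b := A)).exists_bound_of_continuousOn
    hg.continuousOn
  refine ⟨max C (|L| + 1), fun x hx => ?_⟩
  rcases le_total A x with h | h
  · exact (hA x h).trans (le_max_right _ _)
  · exact (hC x ⟨hx, h⟩).trans (le_max_left _ _)

/-- Without boundedness of `|f|` off `0`, the supremum in `Xnorm` would carry no information. -/
lemma abs_le_Xnorm {f : ℝ → ℝ} (hf : memX f) {x : ℝ} (hx : x ≠ 0) : |f x| ≤ Xnorm f := by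
  obtain ⟨h1, h2, ⟨fm, hm⟩, ⟨fp, hp⟩, ⟨Lp, hLp⟩, ⟨Lm, hLm⟩⟩ := hf
  obtain ⟨B, hB⟩ := exists_bound_of_tendsto_s4 (glueR_continuous h2 hp) (L := Lp) (by
    refine hLp.congr' ?_
    filter_upwards [eventually_gt_atTop 0] with y hy using (glueR_of_pos hy).symm)
  obtain ⟨C, hC⟩ := exists_bound_of_tendsto_s4
    (g := fun y => glueL f fm (-y)) ((glueL_continuous h1 hm).comp continuous_neg) (L := Lm) (by
      refine (hLm.comp tendsto_neg_atTop_atBot).congr' ?_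
      filter_upwards [eventually_gt_atTop 0] with y hy
        using (glueL_of_neg (neg_lt_zero.mpr hy)).symm)
  have hb : BddAbove (range fun x : {y : ℝ // y ≠ 0} => |f x.1|) := by
    refine ⟨max B C, ?_⟩
    rintro _ ⟨⟨y, hy⟩, rfl⟩
    rcases lt_or_gt_of_ne hy with h | h
    · have := hC (-y) (by linarith)
      rw [neg_neg, glueL_of_neg h] at this
      exact this.trans (le_max_right _ _)
    · have := hB y h.le
      rw [glueR_of_pos h] at this
      exact this.trans (le_max_left _ _)
  exact le_ciSup hb ⟨x, hx⟩

lemma Xnorm_nonneg (f : ℝ → ℝ) : 0 ≤ Xnorm f := Real.iSup_nonneg fun _ => abs_nonneg _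

lemma abs_glueR_le {f : ℝ → ℝ} (hf : memX f) {c : ℝ} (hc : Tendsto f (𝓝[>] 0) (𝓝 c)) (x : ℝ) :
    |glueR f c x| ≤ Xnorm f := by
  unfold glueR
  split_ifs with h
  · exact abs_le_Xnorm hf h.ne'
  · refine le_of_tendsto hc.abs ?_
    filter_upwards [self_mem_nhdsWithin] with y hy using abs_le_Xnorm hf (ne_of_gt hy)

lemma abs_glueL_le {f : ℝ → ℝ} (hf : memX f) {c : ℝ} (hc : Tendsto f (𝓝[<] 0) (𝓝 c)) (x : ℝ) :
    |glueL f c x| ≤ Xnorm f := by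
  unfold glueL
  split_ifs with h
  · exact abs_le_Xnorm hf h.ne
  · refine le_of_tendsto hc.abs ?_
    filter_upwards [self_mem_nhdsWithin] with y hy using abs_le_Xnorm hf (ne_of_lt hy)

/-- For `h(y) = G(|y|) - 2 a J(y⁻)`, the convolution `e_a * h` is the odd extension of
`J|_[0,∞)`. -/
lemma conv_eq {a : ℝ} {G h : ℝ → ℝ} (hG : Continuous G)
    (hh : ∀ y, h y = G |y| - 2 * a * kern a G (max (-y) 0)) (x : ℝ) :
    conv (expa a) h x = kern a G (max x 0) - kern a G (max (-x) 0) := by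
  have hc : conv (expa a) h x = kern a h x := by rw [kern_eq]; rfl
  rw [hc]
  rcases le_total 0 x with hx | hx
  · rw [max_eq_left hx, max_eq_right (by linarith), kern_zero, sub_zero]
    unfold kern
    congr 1
    refine integral_congr fun y hy => ?_
    rw [uIcc_of_le hx] at hy
    simp only [hh, abs_of_nonneg hy.1, max_eq_right (neg_nonpos.mpr hy.1), kern_zero]
    ring
  · rw [max_eq_right hx, max_eq_left (by linarith), kern_zero, zero_sub]
    have e : Real.exp (-(a * x)) * Real.exp (a * x) = 1 := by
      rw [← Real.exp_add]; simp
    have h1 : ∫ y in (0:ℝ)..x, Real.exp (a * y) * h y =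
        ∫ y in (0:ℝ)..x, Real.exp (a * y) * (G (-y) - 2 * a * kern a G (-y)) := by
      refine integral_congr fun y hy => ?_
      rw [uIcc_of_ge hx] at hy
      simp only [hh, abs_of_nonpos hy.2, max_eq_left (neg_nonneg.mpr hy.2)]
    have h2 : kern a h x = Real.exp (-(a * x)) * ∫ y in (0:ℝ)..x, Real.exp (a * y) * h y := rfl
    rw [h2, h1, integral_neg_side hG]
    linear_combination (-kern a G (-x)) * e

/-- The norm estimate shared by both extensions: `γ` is `α` or `β`, `u` the value taken from `f`,
`k` the convolution term, `X` the norm of `f`. -/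
lemma bound_aux {a γ m X u k : ℝ} (hγ : 0 ≤ γ) (hm : γ ≤ m)
    (hu : |u| ≤ X) (hk : |k| ≤ 2 * X / a) : |u + 2 * γ * k| ≤ (1 + 4 * m / a) * X := by
  calc |u + 2 * γ * k| ≤ |u| + |2 * γ * k| := abs_add_le _ _
    _ = |u| + 2 * γ * |k| := by rw [abs_mul, abs_of_nonneg (by positivity : 0 ≤ 2 * γ)]
    _ ≤ X + 2 * m * (2 * X / a) := by
        have : 0 ≤ m := hγ.trans hm
        gcongr
    _ = (1 + 4 * m / a) * X := by ring


/-- the extension operator `E_{α,β}` is a (linear) bijection of `𝔛`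
onto `𝒞_{α,β}`, with the stated norm bounds, inverted by the restriction operator. -/
theorem statement4 (α β : ℝ) (hα : 0 ≤ α) (hβ : 0 ≤ β) (hαβ : 0 < α + β) :
    (∀ f : ℝ → ℝ, ∀ fm fp : ℝ, memX f →
      Tendsto f (nhdsWithin 0 (Iio 0)) (nhds fm) →
      Tendsto f (nhdsWithin 0 (Ioi 0)) (nhds fp) →
      memCab α β (extL α β f fm) (extR α β f fp) ∧
      max (Cnorm (extL α β f fm)) (Cnorm (extR α β f fp)) ≤
        (1 + 4 * max α β / (α + β)) * Xnorm f ∧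
      (1 + 4 * max α β / (α + β)) * Xnorm f ≤ 5 * Xnorm f ∧
      (∀ x : ℝ, x ≠ 0 → restr (extL α β f fm) (extR α β f fp) x = f x)) ∧
    (∀ ψ₁ ψ₂ : ℝ → ℝ, memCab α β ψ₁ ψ₂ →
      extL α β (restr ψ₁ ψ₂) (ψ₁ 0) = ψ₁ ∧ extR α β (restr ψ₁ ψ₂) (ψ₂ 0) = ψ₂) := by
  refine ⟨?_, ?_⟩
  · intro f fm fp hf hm hp
    have hX := Xnorm_nonneg f
    have hPc := glueR_continuous hf.2.1 hp
    have hMc := glueL_continuous hf.1 hm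
    have hPb := abs_glueR_le hf hp
    have hMb := abs_glueL_le hf hm
    have hL := extL_eq α β f fm fp
    have hR := extR_eq α β f fm fp
    set G : ℝ → ℝ := fun y => glueR f fp y - glueL f fm (-y) with hGdef
    have hGc : Continuous G := by fun_prop
    have hGb : ∀ y, |G y| ≤ 2 * Xnorm f := fun y => by
      have := abs_sub (glueR f fp y) (glueL f fm (-y))
      linarith [hPb y, hMb (-y)]
    have hk := kern_continuous (a := α + β) hGc
    have hkb : ∀ x : ℝ, |kern (α + β) G (max x 0)| ≤ 2 * Xnorm f / (α + β) := fun x =>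
      kern_bound hαβ (by positivity) hGb (le_max_right _ _)
    obtain ⟨-, -, -, -, ⟨Lp, hLp⟩, ⟨Lm, hLm⟩⟩ := id hf
    have hPt : Tendsto (glueR f fp) atTop (𝓝 Lp) := by
      refine hLp.congr' ?_
      filter_upwards [eventually_gt_atTop 0] with y hy using (glueR_of_pos hy).symm
    have hMt : Tendsto (glueL f fm) atBot (𝓝 Lm) := by
      refine hLm.congr' ?_
      filter_upwards [eventually_lt_atBot 0] with y hy using (glueL_of_neg hy).symm
    obtain ⟨l, hl⟩ := kern_tendsto hαβ hGc hGb
      (hPt.sub (hMt.comp tendsto_neg_atTop_atBot))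
    have hmax : Tendsto (fun x : ℝ => max x 0) atTop atTop :=
      tendsto_atTop_mono (fun x => le_max_left x 0) tendsto_id
    have hconv := conv_eq (a := α + β) (G := G)
      (h := fun y => extR α β f fp y - extL α β f fm (-y)) hGc (by
        intro y
        simp only [hL, hR, abs_neg, hGdef]
        ring)
    refine ⟨⟨⟨?_, ⟨Lm + 2 * α * l, ?_⟩, ⟨Lm, ?_⟩⟩, ⟨?_, ⟨Lp, ?_⟩, ⟨Lp - 2 * β * l, ?_⟩⟩, ?_, ?_⟩,
      ?_, ?_, ?_⟩
    · rw [funext hL]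
      fun_prop
    · rw [funext hL]
      exact (hMt.comp (tendsto_neg_atTop_atBot.comp tendsto_abs_atTop_atTop)).add
        ((hl.comp hmax).const_mul _)
    · refine hLm.congr' ?_
      filter_upwards [eventually_lt_atBot 0] with y hy
      simp [extL, hy]
    · rw [funext hR]
      fun_prop
    · refine hLp.congr' ?_
      filter_upwards [eventually_gt_atTop 0] with y hy
      simp [extR, hy]
    · rw [funext hR]
      exact (hPt.comp tendsto_abs_atBot_atTop).sub
        ((hl.comp (hmax.comp tendsto_neg_atBot_atTop)).const_mul _)
    · intro x
      rw [hconv]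
      simp only [oddPart, hL, abs_neg]
      ring
    · intro x
      rw [hconv]
      simp only [oddPart, hR, abs_neg, neg_neg]
      ring
    · refine max_le (ciSup_le fun x => ?_) (ciSup_le fun x => ?_)
      · rw [hL]
        exact bound_aux hα (le_max_left _ _) (hMb _) (hkb x)
      · rw [hR, sub_eq_add_neg, ← mul_neg]
        exact bound_aux hβ (le_max_right _ _) (hPb _) (by rw [abs_neg]; exact hkb (-x))
    · refine mul_le_mul_of_nonneg_right ?_ hX
      have : 4 * max α β / (α + β) ≤ 4 := by
        rw [div_le_iff₀ hαβ]
        have : max α β ≤ α + β := max_le (by linarith) (by linarith)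
        linarith
      linarith
    · intro x hx
      rcases lt_or_gt_of_ne hx with h | h
      · simp [restr, extL, h]
      · simp [restr, extR, h, h.not_gt]
  · rintro ψ₁ ψ₂ ⟨-, -, h1, h2⟩
    have hint : ∀ x : ℝ, 0 ≤ x → ∫ y in (0:ℝ)..x, Real.exp (-((α + β) * (x - y))) *
        (restr ψ₁ ψ₂ y - restr ψ₁ ψ₂ (-y)) =
        conv (expa (α + β)) (fun y => ψ₂ y - ψ₁ (-y)) x := by
      intro x hx
      refine integral_congr_ae (ae_of_all _ fun y hy => ?_)
      rw [uIoc_of_le hx] at hy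
      simp [restr, expa, hy.1, hy.1.not_gt]
    constructor
    · funext x
      unfold extL
      split_ifs with hx hx0
      · simp [restr, hx]
      · rw [hx0]
      · have hpos : 0 < x := lt_of_le_of_ne (not_lt.mp hx) (Ne.symm hx0)
        have := h1 x
        rw [hint x hpos.le]
        simp only [oddPart] at this
        simp only [restr, neg_lt_zero, hpos, if_true]
        linarith
    · funext x
      unfold extR
      split_ifs with hx hx0
      · simp [restr, hx.not_gt]
      · rw [hx0]
      · have hneg : x < 0 := lt_of_le_of_ne (not_lt.mp hx) hx0
        have := h2 (-x)
        rw [hint (-x) (by linarith)]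
        simp only [oddPart, neg_neg] at this
        simp only [restr, if_neg (by linarith : ¬ (-x < 0))]
        linarith
end
end

section
/- Fix α, β ≥ 0 with α + β > 0. Let f ∈ 𝔛 be twice continuously differentiable on (−∞,0) and on (0,∞) with f′ and f″ also in 𝔛 (i.e., f′ and f″ have finite one-sided limits at 0 and finite limits at ±∞). Then both extensions f̃_ℓ and f̃_r are twice continuously differentiable on all of ℝ if and only if f satisfies the transmission conditions f′(0−) = α(f(0+) − f(0−)) and f′(0+) = β(f(0+) − f(0−)). -/
/-! The extension `f̃_ℓ` is obtained by gluing two `C²` pieces at `0`, namely `f` on the left and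
`x ↦ f (-x) + 2 α J x` on the right, where `J x = ∫₀ˣ e^{-(α+β)(x-y)} (f y - f (-y)) dy` solves
`J' = h - (α+β) J`, `J 0 = 0`, with `h y = f y - f (-y)` (`exists_conv_primitive`).

Such a glued function is `C²` exactly when the one-sided limits at `0` of its derivatives of
orders 0, 1, 2 agree. Order 0 always agrees. In order 1 the limits are `f'(0-)` and
`-f'(0-) + 2 α (f(0+) - f(0-))`, so agreement is the condition `f'(0-) = α (f(0+) - f(0-))`
(`extL_transmission`). In order 2 they are `f''(0-)` and
`f''(0-) + 2 α (f'(0+) + f'(0-) - (α+β) (f(0+) - f(0-)))`, which agree as soon as both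
transmission conditions hold (`extL_contDiff`).

The extension `f̃_r` reduces to `f̃_ℓ` by the reflection `x ↦ -x`, which exchanges `α` and `β`
(`extR_eq_extL`). -/

open Filter Topology MeasureTheory Set intervalIntegral

noncomputable section

/-- The function equal to `u` on `(-∞, 0)`, to `m` at `0` and to `v` on `(0, ∞)`. -/
def glue (u v : ℝ → ℝ) (m : ℝ) : ℝ → ℝ := fun x =>
  if x < 0 then u x else if x = 0 then m else v x

lemma glue_of_neg {u v : ℝ → ℝ} {m x : ℝ} (hx : x < 0) : glue u v m x = u x := by
  simp [glue, hx]

lemma glue_of_pos {u v : ℝ → ℝ} {m x : ℝ} (hx : 0 < x) : glue u v m x = v x := by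
  simp [glue, hx.le, hx.ne', not_lt]

lemma glue_zero {u v : ℝ → ℝ} {m : ℝ} : glue u v m 0 = m := by
  simp [glue]

lemma glue_eventuallyEq_of_neg {u v : ℝ → ℝ} {m x : ℝ} (hx : x < 0) :
    glue u v m =ᶠ[𝓝 x] u := by
  filter_upwards [Iio_mem_nhds hx] with y hy using glue_of_neg hy

lemma glue_eventuallyEq_of_pos {u v : ℝ → ℝ} {m x : ℝ} (hx : 0 < x) :
    glue u v m =ᶠ[𝓝 x] v := by
  filter_upwards [Ioi_mem_nhds hx] with y hy using glue_of_pos hy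

lemma glue_continuousAt_zero {u v : ℝ → ℝ} {m : ℝ} (hu : Tendsto u (𝓝[<] 0) (𝓝 m))
    (hv : Tendsto v (𝓝[>] 0) (𝓝 m)) : ContinuousAt (glue u v m) 0 := by
  rw [continuousAt_iff_continuous_left'_right']
  constructor
  · rw [ContinuousWithinAt, glue_zero]
    refine hu.congr' ?_
    filter_upwards [self_mem_nhdsWithin] with y hy using (glue_of_neg hy).symm
  · rw [ContinuousWithinAt, glue_zero]
    refine hv.congr' ?_
    filter_upwards [self_mem_nhdsWithin] with y hy using (glue_of_pos hy).symm

lemma glue_hasDerivAt_of_ne {u v u' v' : ℝ → ℝ} {m m' : ℝ}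
    (hu : ∀ x < 0, HasDerivAt u (u' x) x) (hv : ∀ x > 0, HasDerivAt v (v' x) x)
    {x : ℝ} (hx : x ≠ 0) : HasDerivAt (glue u v m) (glue u' v' m' x) x := by
  rcases lt_or_gt_of_ne hx with h | h
  · rw [glue_of_neg h]
    exact (hu x h).congr_of_eventuallyEq (glue_eventuallyEq_of_neg h)
  · rw [glue_of_pos h]
    exact (hv x h).congr_of_eventuallyEq (glue_eventuallyEq_of_pos h)

/-- If the one-sided limits at `0` of the pieces and of their derivatives agree, then the glued
function is differentiable everywhere. -/
lemma glue_hasDerivAt {u v u' v' : ℝ → ℝ} {m m' : ℝ}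
    (hu : ∀ x < 0, HasDerivAt u (u' x) x) (hv : ∀ x > 0, HasDerivAt v (v' x) x)
    (hu0 : Tendsto u (𝓝[<] 0) (𝓝 m)) (hv0 : Tendsto v (𝓝[>] 0) (𝓝 m))
    (hu'0 : Tendsto u' (𝓝[<] 0) (𝓝 m')) (hv'0 : Tendsto v' (𝓝[>] 0) (𝓝 m')) (x : ℝ) :
    HasDerivAt (glue u v m) (glue u' v' m' x) x :=
  hasDerivAt_of_hasDerivAt_of_ne' (fun _ hy => glue_hasDerivAt_of_ne hu hv hy)
    (glue_continuousAt_zero hu0 hv0) (glue_continuousAt_zero hu'0 hv'0) x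

lemma tendsto_neg_right_zero : Tendsto (fun x : ℝ => -x) (𝓝[>] 0) (𝓝[<] 0) := by
  simpa using tendsto_neg_nhdsGT (a := (0 : ℝ))

lemma tendsto_neg_left_zero : Tendsto (fun x : ℝ => -x) (𝓝[<] 0) (𝓝[>] 0) := by
  simpa using tendsto_neg_nhdsLT (a := (0 : ℝ))

/-- The convolution term `J` of `extL` solves `J' = h - c J` on `(0, ∞)` with `J(0+) = 0`, where
`h y = f y - f (-y)`. -/
lemma exists_conv_primitive (c : ℝ) (f : ℝ → ℝ) (fm fp : ℝ)
    (hcont : ∀ x : ℝ, x ≠ 0 → ContinuousAt f x)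
    (hfm : Tendsto f (𝓝[<] 0) (𝓝 fm)) (hfp : Tendsto f (𝓝[>] 0) (𝓝 fp)) :
    ∃ J : ℝ → ℝ,
      (∀ x > 0, ∫ y in (0:ℝ)..x, Real.exp (-(c * (x - y))) * (f y - f (-y)) = J x) ∧
      (∀ x > 0, HasDerivAt J (f x - f (-x) - c * J x) x) ∧
      Tendsto J (𝓝[>] 0) (𝓝 0) := by
  -- `f y - f (-y)` need not be continuous at `0`; only its values on `(0, ∞)` matter, so it is
  -- replaced by a continuous function `H` on the whole line.
  set H : ℝ → ℝ := glue (fun _ => fp - fm) (fun y => f y - f (-y)) (fp - fm) with hH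
  have hHc : Continuous H := by
    rw [continuous_iff_continuousAt]
    intro x
    rcases lt_trichotomy x 0 with h | h | h
    · exact continuousAt_const.congr (glue_eventuallyEq_of_neg h).symm
    · subst h
      exact glue_continuousAt_zero tendsto_const_nhds
        (hfp.sub (hfm.comp tendsto_neg_right_zero))
    · refine ContinuousAt.congr ?_ (glue_eventuallyEq_of_pos h).symm
      exact (hcont x h.ne').sub
        (ContinuousAt.comp (f := fun y : ℝ => -y) (hcont (-x) (neg_ne_zero.2 h.ne'))
          continuous_neg.continuousAt)
  have hGc : Continuous fun y => Real.exp (c * y) * H y := by fun_prop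
  set K : ℝ → ℝ := fun x => ∫ y in (0:ℝ)..x, Real.exp (c * y) * H y with hK
  have hKd : ∀ x, HasDerivAt K (Real.exp (c * x) * H x) x := fun x =>
    hGc.integral_hasStrictDerivAt 0 x |>.hasDerivAt
  have hJd : ∀ x, HasDerivAt (fun x => Real.exp (-(c * x)) * K x)
      (H x - c * (Real.exp (-(c * x)) * K x)) x := by
    intro x
    have h1 : HasDerivAt (fun x : ℝ => Real.exp (-(c * x))) (Real.exp (-(c * x)) * (-(c * 1))) x :=
      (((hasDerivAt_id x).const_mul c).neg).exp
    refine (h1.mul (hKd x)).congr_deriv ?_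
    have h2 : Real.exp (-(c * x)) * Real.exp (c * x) = 1 := by
      rw [← Real.exp_add]; simp
    linear_combination H x * h2
  refine ⟨fun x => Real.exp (-(c * x)) * K x, ?_, ?_, ?_⟩
  · intro x hx
    simp only [hK]
    rw [← intervalIntegral.integral_const_mul]
    refine intervalIntegral.integral_congr_ae (Eventually.of_forall fun y hy => ?_)
    rw [uIoc_of_le hx.le] at hy
    rw [hH, glue_of_pos hy.1, ← mul_assoc, ← Real.exp_add]
    congr 2
    ring
  · intro x hx
    have := hJd x
    rwa [hH, glue_of_pos hx] at this
  · have h : Tendsto (fun x => Real.exp (-(c * x)) * K x) (𝓝 0)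
        (𝓝 (Real.exp (-(c * 0)) * K 0)) := (hJd 0).continuousAt
    have h0 : K 0 = 0 := by simp [hK]
    rw [h0, mul_zero] at h
    exact h.mono_left nhdsWithin_le_nhds

lemma extL_eq_glue {α β : ℝ} {f J : ℝ → ℝ} {fm : ℝ}
    (hJ : ∀ x > 0,
      ∫ y in (0:ℝ)..x, Real.exp (-((α + β) * (x - y))) * (f y - f (-y)) = J x) :
    extL α β f fm = glue f (fun x => f (-x) + 2 * α * J x) fm := by
  funext x
  rcases lt_trichotomy x 0 with h | h | h
  · rw [glue_of_neg h]; simp [extL, h]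
  · subst h; rw [glue_zero]; simp [extL]
  · rw [glue_of_pos h, ← hJ x h]; simp [extL, not_lt.2 h.le, h.ne']

lemma hasDerivAt_reflect {f f' : ℝ → ℝ} (hder : ∀ x : ℝ, x ≠ 0 → HasDerivAt f (f' x) x)
    {x : ℝ} (hx : x ≠ 0) : HasDerivAt (fun y => f (-y)) (-f' (-x)) x := by
  have h := (hder (-x) (neg_ne_zero.2 hx)).comp x (hasDerivAt_neg x)
  simpa [Function.comp_def] using h

/-- Comparing the one-sided limits of the derivative at `0` gives the left transmission
condition. -/
lemma extL_transmission {α β : ℝ} {f f' : ℝ → ℝ} {fm fp f'm : ℝ}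
    (hfm : Tendsto f (𝓝[<] 0) (𝓝 fm)) (hfp : Tendsto f (𝓝[>] 0) (𝓝 fp))
    (hder : ∀ x : ℝ, x ≠ 0 → HasDerivAt f (f' x) x)
    (hf'm : Tendsto f' (𝓝[<] 0) (𝓝 f'm))
    (hC : ContDiff ℝ 2 (extL α β f fm)) : f'm = α * (fp - fm) := by
  obtain ⟨J, hJ, hJd, hJ0⟩ := exists_conv_primitive (α + β) f fm fp
    (fun x hx => (hder x hx).continuousAt) hfm hfp
  rw [extL_eq_glue hJ] at hC
  set E := glue f (fun x => f (-x) + 2 * α * J x) fm with hE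
  have hc : Tendsto (deriv E) (𝓝 0) (𝓝 (deriv E 0)) :=
    (hC.continuous_deriv (by norm_num)).continuousAt
  have hv : ∀ x > 0, HasDerivAt (fun x => f (-x) + 2 * α * J x)
      (-f' (-x) + 2 * α * (f x - f (-x) - (α + β) * J x)) x := fun x hx =>
    (hasDerivAt_reflect hder hx.ne').add ((hJd x hx).const_mul _)
  have hd : ∀ x : ℝ, x ≠ 0 → deriv E x = glue f'
      (fun x => -f' (-x) + 2 * α * (f x - f (-x) - (α + β) * J x)) 0 x := fun x hx =>
    (glue_hasDerivAt_of_ne (fun y hy => hder y hy.ne) hv hx).deriv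
  have hl : f'm = deriv E 0 := by
    refine tendsto_nhds_unique (hf'm.congr' ?_) (hc.mono_left nhdsWithin_le_nhds)
    filter_upwards [self_mem_nhdsWithin] with x hx
    rw [hd x (ne_of_lt hx), glue_of_neg hx]
  have hr : -f'm + 2 * α * (fp - fm - (α + β) * 0) = deriv E 0 := by
    have hlim := (hf'm.comp tendsto_neg_right_zero).neg.add
      (((hfp.sub (hfm.comp tendsto_neg_right_zero)).sub
        (hJ0.const_mul (α + β))).const_mul (2 * α))
    refine tendsto_nhds_unique (hlim.congr' ?_) (hc.mono_left nhdsWithin_le_nhds)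
    filter_upwards [self_mem_nhdsWithin] with x hx
    rw [hd x (ne_of_gt hx), glue_of_pos hx]
    rfl
  linarith

lemma extL_contDiff {α β : ℝ} {f f' f'' : ℝ → ℝ} {fm fp f'm f'p : ℝ}
    (hfm : Tendsto f (𝓝[<] 0) (𝓝 fm)) (hfp : Tendsto f (𝓝[>] 0) (𝓝 fp))
    (hder : ∀ x : ℝ, x ≠ 0 → HasDerivAt f (f' x) x)
    (hder2 : ∀ x : ℝ, x ≠ 0 → HasDerivAt f' (f'' x) x)
    (hf'' : ∀ x : ℝ, x ≠ 0 → ContinuousAt f'' x)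
    (hf''m : ∃ L, Tendsto f'' (𝓝[<] 0) (𝓝 L))
    (hf'm : Tendsto f' (𝓝[<] 0) (𝓝 f'm)) (hf'p : Tendsto f' (𝓝[>] 0) (𝓝 f'p))
    (hm : f'm = α * (fp - fm)) (hp : f'p = β * (fp - fm)) :
    ContDiff ℝ 2 (extL α β f fm) := by
  obtain ⟨J, hJ, hJd, hJ0⟩ := exists_conv_primitive (α + β) f fm fp
    (fun x hx => (hder x hx).continuousAt) hfm hfp
  obtain ⟨f''m, hf''m⟩ := hf''m
  rw [extL_eq_glue hJ]
  set c := α + β with hc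
  have hfm' := hfm.comp tendsto_neg_right_zero
  have hf'm' := hf'm.comp tendsto_neg_right_zero
  have hf''m' := hf''m.comp tendsto_neg_right_zero
  set v : ℝ → ℝ := fun x => f (-x) + 2 * α * J x with hv
  set v' : ℝ → ℝ := fun x => -f' (-x) + 2 * α * (f x - f (-x) - c * J x) with hv'
  set v'' : ℝ → ℝ := fun x =>
    f'' (-x) + 2 * α * (f' x + f' (-x) - c * (f x - f (-x) - c * J x)) with hv''
  have dv : ∀ x > 0, HasDerivAt v (v' x) x := fun x hx =>
    (hasDerivAt_reflect hder hx.ne').add ((hJd x hx).const_mul _)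
  have dv' : ∀ x > 0, HasDerivAt v' (v'' x) x := fun x hx => by
    refine ((hasDerivAt_reflect hder2 hx.ne').neg.add
      ((((hder x hx.ne').sub (hasDerivAt_reflect hder hx.ne')).sub
        ((hJd x hx).const_mul c)).const_mul (2 * α))).congr_deriv ?_
    simp only [hv'']
    ring
  have lv : Tendsto v (𝓝[>] 0) (𝓝 fm) := by
    have h := hfm'.add (hJ0.const_mul (2 * α))
    rw [mul_zero, add_zero] at h
    exact h
  have lv' : Tendsto v' (𝓝[>] 0) (𝓝 f'm) := by
    have h := hf'm'.neg.add (((hfp.sub hfm').sub (hJ0.const_mul c)).const_mul (2 * α))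
    have e : -f'm + 2 * α * (fp - fm - c * 0) = f'm := by rw [hm]; ring
    rw [e] at h
    exact h
  have lv'' : Tendsto v'' (𝓝[>] 0) (𝓝 f''m) := by
    have h := hf''m'.add (((hf'p.add hf'm').sub
      (((hfp.sub hfm').sub (hJ0.const_mul c)).const_mul c)).const_mul (2 * α))
    have e : f''m + 2 * α * (f'p + f'm - c * (fp - fm - c * 0)) = f''m := by
      rw [hm, hp, hc]; ring
    rw [e] at h
    exact h
  have d1 : ∀ x, HasDerivAt (glue f v fm) (glue f' v' f'm x) x :=
    glue_hasDerivAt (fun x hx => hder x hx.ne) dv hfm lv hf'm lv'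
  have d2 : ∀ x, HasDerivAt (glue f' v' f'm) (glue f'' v'' f''m x) x :=
    glue_hasDerivAt (fun x hx => hder2 x hx.ne) dv' hf'm lv' hf''m lv''
  have hcont : Continuous (glue f'' v'' f''m) := by
    rw [continuous_iff_continuousAt]
    intro x
    rcases lt_trichotomy x 0 with h | h | h
    · exact (hf'' x h.ne).congr (glue_eventuallyEq_of_neg h).symm
    · subst h
      exact glue_continuousAt_zero hf''m lv''
    · refine ContinuousAt.congr ?_ (glue_eventuallyEq_of_pos h).symm
      have c0 : ContinuousAt (fun y => f'' (-y)) x :=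
        ContinuousAt.comp (f := fun y : ℝ => -y) (hf'' (-x) (neg_ne_zero.2 h.ne'))
          continuous_neg.continuousAt
      have c1 := (hder x h.ne').continuousAt
      have c2 := (hasDerivAt_reflect hder h.ne').continuousAt
      have c3 := (hder2 x h.ne').continuousAt
      have c4 := (hasDerivAt_reflect hder2 h.ne').continuousAt
      have c5 := (hJd x h).continuousAt
      exact c0.add (continuousAt_const.mul ((c3.add c4).sub
        (continuousAt_const.mul ((c1.sub c2).sub (continuousAt_const.mul c5)))))
  have e1 : deriv (glue f v fm) = glue f' v' f'm := funext fun x => (d1 x).deriv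
  have e2 : deriv (glue f' v' f'm) = glue f'' v'' f''m := funext fun x => (d2 x).deriv
  have k1 : ContDiff ℝ 1 (glue f' v' f'm) := by
    rw [contDiff_one_iff_deriv, e2]
    exact ⟨fun x => (d2 x).differentiableAt, hcont⟩
  have k2 : ContDiff ℝ (1 + 1) (glue f v fm) := by
    rw [contDiff_succ_iff_deriv, e1]
    exact ⟨fun x => (d1 x).differentiableAt, by simp, k1⟩
  exact k2.of_le (by norm_num)

/-- Reflection at `0` turns the right extension into a left extension with `α`, `β` exchanged. -/
lemma extR_eq_extL (α β : ℝ) (f : ℝ → ℝ) (fp : ℝ) (x : ℝ) :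
    extR α β f fp x = extL β α (fun y => f (-y)) fp (-x) := by
  rcases lt_trichotomy x 0 with h | h | h
  · have e : ∫ y in (0:ℝ)..(-x), Real.exp (-((β + α) * (-x - y))) * (f (-y) - f y) =
        -∫ y in (0:ℝ)..(-x), Real.exp (-((α + β) * (-x - y))) * (f y - f (-y)) := by
      rw [← intervalIntegral.integral_neg]
      congr 1
      funext y
      rw [add_comm β α]
      ring
    simp only [extR, extL, neg_neg]
    rw [if_neg (not_lt.2 h.le), if_neg h.ne, if_neg (by linarith),
      if_neg (neg_ne_zero.2 h.ne), e]
    ring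
  · subst h; simp [extR, extL]
  · simp [extR, extL, h]

/-- for `f ∈ 𝔛` twice continuously differentiable off `0` with `f', f'' ∈ 𝔛`,
the extensions `f̃_ℓ, f̃_r` are twice continuously differentiable on `ℝ` iff `f` satisfies the
transmission conditions `f'(0-) = α(f(0+)-f(0-))` and `f'(0+) = β(f(0+)-f(0-))`. -/
theorem statement5 (α β : ℝ) (hα : 0 ≤ α) (hβ : 0 ≤ β) (hαβ : 0 < α + β)
    (f f' f'' : ℝ → ℝ) (fm fp f'm f'p : ℝ)
    (hf : memX f)
    (hfm : Tendsto f (nhdsWithin 0 (Iio 0)) (nhds fm))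
    (hfp : Tendsto f (nhdsWithin 0 (Ioi 0)) (nhds fp))
    (hder : ∀ x : ℝ, x ≠ 0 → HasDerivAt f (f' x) x)
    (hder2 : ∀ x : ℝ, x ≠ 0 → HasDerivAt f' (f'' x) x)
    (hf' : memX f') (hf'' : memX f'')
    (hf'm : Tendsto f' (nhdsWithin 0 (Iio 0)) (nhds f'm))
    (hf'p : Tendsto f' (nhdsWithin 0 (Ioi 0)) (nhds f'p)) :
    (ContDiff ℝ 2 (extL α β f fm) ∧ ContDiff ℝ 2 (extR α β f fp)) ↔
    (f'm = α * (fp - fm) ∧ f'p = β * (fp - fm)) := by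
  have hc'' : ∀ x : ℝ, x ≠ 0 → ContinuousAt f'' x := fun x hx => by
    rcases lt_or_gt_of_ne hx with h | h
    · exact hf''.1.continuousAt (Iio_mem_nhds h)
    · exact hf''.2.1.continuousAt (Ioi_mem_nhds h)
  -- The data of the reflected function `y ↦ f (-y)`.
  have gm := hfp.comp tendsto_neg_left_zero
  have gp := hfm.comp tendsto_neg_right_zero
  have g'm := (hf'p.comp tendsto_neg_left_zero).neg
  have g'p := (hf'm.comp tendsto_neg_right_zero).neg
  have gder : ∀ x : ℝ, x ≠ 0 → HasDerivAt (fun y => f (-y)) (-f' (-x)) x :=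
    fun x hx => hasDerivAt_reflect hder hx
  have gder2 : ∀ x : ℝ, x ≠ 0 → HasDerivAt (fun y => -f' (-y)) (f'' (-x)) x :=
    fun x hx => (hasDerivAt_reflect hder2 hx).neg.congr_deriv (neg_neg _)
  have gc'' : ∀ x : ℝ, x ≠ 0 → ContinuousAt (fun y => f'' (-y)) x := fun x hx =>
    ContinuousAt.comp (f := fun y : ℝ => -y) (hc'' (-x) (neg_ne_zero.2 hx))
      continuous_neg.continuousAt
  have hR : extR α β f fp = fun x => extL β α (fun y => f (-y)) fp (-x) :=
    funext (extR_eq_extL α β f fp)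
  constructor
  · rintro ⟨hL, hRc⟩
    refine ⟨extL_transmission hfm hfp hder hf'm hL, ?_⟩
    have hL' : ContDiff ℝ 2 (extL β α (fun y => f (-y)) fp) := by
      rw [hR] at hRc
      simpa [Function.comp_def] using hRc.comp (contDiff_neg (n := 2))
    have := extL_transmission gm gp gder g'm hL'
    linarith
  · rintro ⟨hm, hp⟩
    refine ⟨extL_contDiff hfm hfp hder hder2 hc'' hf''.2.2.1 hf'm hf'p hm hp, ?_⟩
    obtain ⟨L, hL⟩ := hf''.2.2.2.1
    have h := extL_contDiff (α := β) (β := α) gm gp gder gder2 gc''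
      ⟨L, hL.comp tendsto_neg_left_zero⟩ g'm g'p (by rw [hp]; ring) (by rw [hm]; ring)
    rw [hR]
    exact h.comp contDiff_neg
end
end

section
/- Fix α, β ≥ 0 with α + β > 0. For every (f₁,f₂) ∈ 𝒞, the pair P_{α,β}(f₁,f₂) = (g₁,g₂) belongs to 𝒞_{α,β}; in particular g₁ and g₂ are continuous on ℝ and possess finite limits at ±∞. -/
/-!
Put `K = k₁ + (γ/2) k₂` and `A(x) = ∫_0^∞ e^{-γs} K(x+s) ds`. Shifting the variable gives
`A(x) = e^{γx} (c - ∫_0^x e^{-γy} K(y) dy)` with `c = A(0)` the constant in the definition of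
`P_{α,β}` (`resolv_eq`). Writing `sinh` and `cosh` through exponentials, and using that `k₁` is odd
and `k₂` is even, the formulas for `P_{α,β}` collapse (`Pone_eq`, `Ptwo_eq`) to
`g₁ = f₁ᵉ - Aᵉ + α D` and `g₂ = f₂ᵉ + Aᵉ + β D`, where `D = (2/γ) Aᵒ`.

Since `K` is bounded and has limits at `±∞`, dominated convergence gives limits of `A`, hence of
`g₁` and `g₂` (`Cinf.resolv`). The odd parts of `g₁` and `g₂` are `α D` and `β D`, so membership in
`𝒞_{α,β}` amounts to `D = e_{α+β} * (g₂ - g₁ᵀ)`. As `D(0) = 0`, this is the differential equation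
`D' + (α+β) D = g₂ - g₁ᵀ` (`conv_expa`), i.e. `D' = 2 Aᵉ - k₂`, which follows from `A' = γ A - K`.
-/

open Filter Topology MeasureTheory Set intervalIntegral

noncomputable section

/-- `γ = sqrt(2(α²+β²))` -/
def gam (α β : ℝ) : ℝ := Real.sqrt (2 * (α ^ 2 + β ^ 2))

/-- `k₁ = α f₁ᵒ + β f₂ᵒ` -/
def kone (α β : ℝ) (f₁ f₂ : ℝ → ℝ) : ℝ → ℝ := fun x => α * oddPart f₁ x + β * oddPart f₂ x

/-- `k₂ = f₁ᵉ - f₂ᵉ` -/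
def ktwo (f₁ f₂ : ℝ → ℝ) : ℝ → ℝ := fun x => evenPart f₁ x - evenPart f₂ x

/-- the constant `c = ∫_0^∞ e^{-γx}(k₁(x) + (γ/2) k₂(x)) dx` -/
def cconst (α β : ℝ) (f₁ f₂ : ℝ → ℝ) : ℝ :=
  ∫ x in Ioi (0:ℝ), Real.exp (-(gam α β * x)) * (kone α β f₁ f₂ x + (gam α β / 2) * ktwo f₁ f₂ x)

/-- first coordinate `g₁` of `P_{α,β}(f₁,f₂)` -/
def Pone (α β : ℝ) (f₁ f₂ : ℝ → ℝ) : ℝ → ℝ := fun x =>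
  evenPart f₁ x +
    cconst α β f₁ f₂ * ((2 * α / gam α β) * Real.sinh (gam α β * x) - Real.cosh (gam α β * x)) -
    conv (fun y => (2 * α / gam α β) * kone α β f₁ f₂ y - (gam α β / 2) * ktwo f₁ f₂ y)
      (fun y => Real.sinh (gam α β * y)) x +
    conv (fun y => kone α β f₁ f₂ y - α * ktwo f₁ f₂ y) (fun y => Real.cosh (gam α β * y)) x

/-- second coordinate `g₂` of `P_{α,β}(f₁,f₂)` -/
def Ptwo (α β : ℝ) (f₁ f₂ : ℝ → ℝ) : ℝ → ℝ := fun x =>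
  evenPart f₂ x +
    cconst α β f₁ f₂ * ((2 * β / gam α β) * Real.sinh (gam α β * x) + Real.cosh (gam α β * x)) -
    conv (fun y => (2 * β / gam α β) * kone α β f₁ f₂ y + (gam α β / 2) * ktwo f₁ f₂ y)
      (fun y => Real.sinh (gam α β * y)) x -
    conv (fun y => kone α β f₁ f₂ y + β * ktwo f₁ f₂ y) (fun y => Real.cosh (gam α β * y)) x

lemma Cinf.neg_comp {f : ℝ → ℝ} (h : Cinf f) : Cinf (fun x => f (-x)) := by
  obtain ⟨hc, ⟨L, hL⟩, ⟨M, hM⟩⟩ := h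
  exact ⟨hc.comp continuous_neg, ⟨M, hM.comp tendsto_neg_atTop_atBot⟩,
    ⟨L, hL.comp tendsto_neg_atBot_atTop⟩⟩

lemma Cinf.lin {f g : ℝ → ℝ} (hf : Cinf f) (hg : Cinf g) (a b : ℝ) :
    Cinf (fun x => a * f x + b * g x) := by
  obtain ⟨hc, ⟨L, hL⟩, ⟨M, hM⟩⟩ := hf
  obtain ⟨hc', ⟨L', hL'⟩, ⟨M', hM'⟩⟩ := hg
  exact ⟨by fun_prop, ⟨_, (hL.const_mul a).add (hL'.const_mul b)⟩,
    ⟨_, (hM.const_mul a).add (hM'.const_mul b)⟩⟩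

lemma Cinf.evenPart {f : ℝ → ℝ} (h : Cinf f) : Cinf (evenPart f) := by
  have := h.lin h.neg_comp (1 / 2) (1 / 2)
  convert this using 2
  simp only [_root_.evenPart]; ring

lemma Cinf.oddPart {f : ℝ → ℝ} (h : Cinf f) : Cinf (oddPart f) := by
  have := h.lin h.neg_comp (1 / 2) (-1 / 2)
  convert this using 2
  simp only [_root_.oddPart]; ring

lemma Cinf.bounded {f : ℝ → ℝ} (h : Cinf f) : ∃ C, ∀ x, |f x| ≤ C := by
  obtain ⟨hc, ⟨L, hL⟩, ⟨M, hM⟩⟩ := h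
  have h1 := hL.abs.eventually_le_const (lt_add_one |L|)
  have h2 := hM.abs.eventually_le_const (lt_add_one |M|)
  obtain ⟨b, hb⟩ := eventually_atTop.1 h1
  obtain ⟨a, ha⟩ := eventually_atBot.1 h2
  obtain ⟨C, hC⟩ := isCompact_Icc.exists_bound_of_continuousOn (s := Icc a b) hc.continuousOn
  refine ⟨max C (max (|L| + 1) (|M| + 1)), fun x => ?_⟩
  rcases le_total b x with hx | hx
  · exact (hb x hx).trans (by simp)
  rcases le_total x a with hx' | hx'
  · exact (ha x hx').trans (by simp)
  · exact (hC x ⟨hx', hx⟩).trans (by simp)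

/-- The resolvent of the translation group: `A(x) = ∫_0^∞ e^{-γs} K(x+s) ds`, the bounded solution
of `A' = γ A - K`. -/
def resolv (γ : ℝ) (K : ℝ → ℝ) : ℝ → ℝ :=
  fun x => ∫ s in Ioi (0:ℝ), Real.exp (-(γ * s)) * K (x + s)

lemma integrable_exp_mul {γ : ℝ} (hγ : 0 < γ) {K : ℝ → ℝ} (hc : Continuous K) {C : ℝ}
    (hC : ∀ x, |K x| ≤ C) (a : ℝ) :
    IntegrableOn (fun s => Real.exp (-(γ * s)) * K s) (Ioi a) := by
  have h := (integrableOn_exp_mul_Ioi (neg_lt_zero.2 hγ) a).mul_const C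
  refine h.mono' (by fun_prop) (ae_of_all _ fun s => ?_)
  rw [norm_mul, Real.norm_eq_abs, Real.norm_eq_abs, Real.abs_exp, neg_mul]
  exact mul_le_mul_of_nonneg_left (hC s) (Real.exp_nonneg _)

/-- Stated for a general filter, so as to cover both `atTop` and `atBot`. -/
lemma tendsto_resolv {γ : ℝ} (hγ : 0 < γ) {K : ℝ → ℝ} (hc : Continuous K) {C : ℝ}
    (hC : ∀ x, |K x| ≤ C) {l : Filter ℝ} [l.IsCountablyGenerated] {L : ℝ}
    (hl : ∀ s : ℝ, Tendsto (fun x => K (x + s)) l (𝓝 L)) :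
    ∃ L', Tendsto (resolv γ K) l (𝓝 L') := by
  refine ⟨∫ s in Ioi (0:ℝ), Real.exp (-(γ * s)) * L, ?_⟩
  have h := (integrableOn_exp_mul_Ioi (neg_lt_zero.2 hγ) 0).mul_const C
  refine tendsto_integral_filter_of_dominated_convergence _ (Eventually.of_forall fun x => ?_)
    (Eventually.of_forall fun x => ae_of_all _ fun s => ?_) h
    (ae_of_all _ fun s => (hl s).const_mul _)
  · exact Continuous.aestronglyMeasurable (by fun_prop)
  · rw [norm_mul, Real.norm_eq_abs, Real.norm_eq_abs, Real.abs_exp, neg_mul]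
    exact mul_le_mul_of_nonneg_left (hC _) (Real.exp_nonneg _)

/-- The variation-of-constants form of `A`. In the formulas for `P_{α,β}` the constant `c` is `A(0)`,
so that the growing exponentials there combine into the bounded function `A`. -/
lemma resolv_eq {γ : ℝ} (hγ : 0 < γ) {K : ℝ → ℝ} (hK : Cinf K) (x : ℝ) :
    resolv γ K x = Real.exp (γ * x) *
      (resolv γ K 0 - ∫ y in (0:ℝ)..x, Real.exp (-(γ * y)) * K y) := by
  obtain ⟨C, hC⟩ := hK.bounded
  have hi := integrable_exp_mul hγ hK.1 hC
  have h0 : resolv γ K 0 = ∫ s in Ioi (0:ℝ), Real.exp (-(γ * s)) * K s := by simp [resolv]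
  rw [h0, ← integral_Ioi_sub_Ioi' (hi 0) (hi x), sub_sub_cancel]
  have h2 : ∫ s in Ioi (0:ℝ), Real.exp (-(γ * (x + s))) * K (x + s) =
      ∫ s in Ioi x, Real.exp (-(γ * s)) * K s := by
    have := (measurePreserving_add_left volume x).setIntegral_preimage_emb
      (measurableEmbedding_addLeft x) (fun s => Real.exp (-(γ * s)) * K s) (Ioi x)
    simpa using this
  rw [← h2, ← MeasureTheory.integral_const_mul]
  refine MeasureTheory.integral_congr_ae (ae_of_all _ fun s => ?_)
  simp only
  rw [← mul_assoc, ← Real.exp_add]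
  ring_nf

lemma hasDerivAt_resolv {γ : ℝ} (hγ : 0 < γ) {K : ℝ → ℝ} (hK : Cinf K) (x : ℝ) :
    HasDerivAt (resolv γ K) (γ * resolv γ K x - K x) x := by
  have hc : Continuous fun y => Real.exp (-(γ * y)) * K y := by have := hK.1; fun_prop
  have h1 := (hc.integral_hasStrictDerivAt 0 x).hasDerivAt
  have h2 : HasDerivAt (fun x => Real.exp (γ * x)) (Real.exp (γ * x) * γ) x := by
    simpa using ((hasDerivAt_id x).const_mul γ).exp
  have h3 := h2.mul (h1.const_sub (resolv γ K 0))
  have h4 : resolv γ K = (fun x => Real.exp (γ * x)) * fun x =>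
      (resolv γ K 0 - ∫ y in (0:ℝ)..x, Real.exp (-(γ * y)) * K y) :=
    funext fun x => resolv_eq hγ hK x
  rw [← h4] at h3
  refine h3.congr_deriv ?_
  have h5 : Real.exp (γ * x) * Real.exp (-(γ * x)) = 1 := by rw [← Real.exp_add]; simp
  rw [resolv_eq hγ hK x]
  linear_combination -K x * h5

lemma Cinf.resolv {γ : ℝ} (hγ : 0 < γ) {K : ℝ → ℝ} (hK : Cinf K) : Cinf (resolv γ K) := by
  obtain ⟨C, hC⟩ := hK.bounded
  have hd := hasDerivAt_resolv hγ hK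
  obtain ⟨hc, ⟨L, hL⟩, ⟨M, hM⟩⟩ := hK
  exact ⟨continuous_iff_continuousAt.2 fun x => (hd x).continuousAt,
    tendsto_resolv hγ hc hC fun s => hL.comp (tendsto_atTop_add_const_right _ s tendsto_id),
    tendsto_resolv hγ hc hC fun s => hM.comp (tendsto_atBot_add_const_right _ s tendsto_id)⟩

lemma conv_comm' (k g : ℝ → ℝ) (x : ℝ) : conv k g x = ∫ y in (0:ℝ)..x, k y * g (x - y) := by
  have := intervalIntegral.integral_comp_sub_left (a := 0) (b := x) (fun y => k y * g (x - y)) x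
  simp only [sub_sub_cancel, sub_self, sub_zero] at this
  exact this

lemma conv_sinh (γ : ℝ) {k : ℝ → ℝ} (hk : Continuous k) (x : ℝ) :
    conv k (fun y => Real.sinh (γ * y)) x =
      (Real.exp (γ * x) * (∫ y in (0:ℝ)..x, Real.exp (-(γ * y)) * k y) -
        Real.exp (-(γ * x)) * ∫ y in (0:ℝ)..x, Real.exp (γ * y) * k y) / 2 := by
  rw [conv_comm', ← intervalIntegral.integral_const_mul, ← intervalIntegral.integral_const_mul,
    ← intervalIntegral.integral_sub, ← intervalIntegral.integral_div]
  · refine intervalIntegral.integral_congr fun y _ => ?_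
    rw [Real.sinh_eq, ← mul_assoc, ← mul_assoc, ← Real.exp_add, ← Real.exp_add]
    ring_nf
  all_goals exact Continuous.intervalIntegrable (by fun_prop) _ _

lemma conv_cosh (γ : ℝ) {k : ℝ → ℝ} (hk : Continuous k) (x : ℝ) :
    conv k (fun y => Real.cosh (γ * y)) x =
      (Real.exp (γ * x) * (∫ y in (0:ℝ)..x, Real.exp (-(γ * y)) * k y) +
        Real.exp (-(γ * x)) * ∫ y in (0:ℝ)..x, Real.exp (γ * y) * k y) / 2 := by
  rw [conv_comm', ← intervalIntegral.integral_const_mul, ← intervalIntegral.integral_const_mul,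
    ← intervalIntegral.integral_add, ← intervalIntegral.integral_div]
  · refine intervalIntegral.integral_congr fun y _ => ?_
    rw [Real.cosh_eq, ← mul_assoc, ← mul_assoc, ← Real.exp_add, ← Real.exp_add]
    ring_nf
  all_goals exact Continuous.intervalIntegrable (by fun_prop) _ _

lemma integral_lin {e u v : ℝ → ℝ} (he : Continuous e) (hu : Continuous u) (hv : Continuous v)
    (a b x : ℝ) : ∫ y in (0:ℝ)..x, e y * (a * u y + b * v y) =
      a * (∫ y in (0:ℝ)..x, e y * u y) + b * ∫ y in (0:ℝ)..x, e y * v y := by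
  rw [← intervalIntegral.integral_const_mul, ← intervalIntegral.integral_const_mul,
    ← intervalIntegral.integral_add]
  · exact intervalIntegral.integral_congr fun y _ => by ring
  all_goals exact Continuous.intervalIntegrable (by fun_prop) _ _

/-- `A(-x)` in terms of integrals over `[0, x]`, when `K = u + (γ/2) v` with `u` odd, `v` even. -/
lemma resolv_neg {γ : ℝ} (hγ : 0 < γ) {u v : ℝ → ℝ} (hu : Cinf u) (hv : Cinf v)
    (huo : ∀ x, u (-x) = -u x) (hve : ∀ x, v (-x) = v x) (x : ℝ) :
    resolv γ (fun x => 1 * u x + γ / 2 * v x) (-x) = Real.exp (-(γ * x)) *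
      (resolv γ (fun x => 1 * u x + γ / 2 * v x) 0 -
        ∫ y in (0:ℝ)..x, Real.exp (γ * y) * (1 * u y + (-(γ / 2)) * v y)) := by
  rw [resolv_eq hγ (hu.lin hv _ _), mul_neg]
  congr 2
  have := intervalIntegral.integral_comp_neg (a := 0) (b := x)
    (fun y => Real.exp (-(γ * y)) * (1 * u y + γ / 2 * v y))
  rw [neg_zero] at this
  rw [intervalIntegral.integral_symm, ← this, ← intervalIntegral.integral_neg]
  refine intervalIntegral.integral_congr fun y _ => ?_
  simp only [huo, hve, mul_neg, neg_neg]
  ring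

/-- The combination `k₁ + (γ/2) k₂` integrated in the constant `c`. -/
def Kfun (α β : ℝ) (f₁ f₂ : ℝ → ℝ) : ℝ → ℝ :=
  fun x => 1 * kone α β f₁ f₂ x + gam α β / 2 * ktwo f₁ f₂ x

/-- The function `A = resolv γ (k₁ + (γ/2) k₂)`, whose even and odd parts build `P_{α,β}`. -/
def Afun (α β : ℝ) (f₁ f₂ : ℝ → ℝ) : ℝ → ℝ := resolv (gam α β) (Kfun α β f₁ f₂)

lemma kone_neg (α β : ℝ) (f₁ f₂ : ℝ → ℝ) (x : ℝ) :
    kone α β f₁ f₂ (-x) = -kone α β f₁ f₂ x := by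
  simp only [kone, oddPart, neg_neg]; ring

lemma ktwo_neg (f₁ f₂ : ℝ → ℝ) (x : ℝ) : ktwo f₁ f₂ (-x) = ktwo f₁ f₂ x := by
  simp only [ktwo, evenPart, neg_neg]; ring

lemma Cinf.kone {f₁ f₂ : ℝ → ℝ} (h₁ : Cinf f₁) (h₂ : Cinf f₂) (α β : ℝ) :
    Cinf (kone α β f₁ f₂) := h₁.oddPart.lin h₂.oddPart α β

lemma Cinf.ktwo {f₁ f₂ : ℝ → ℝ} (h₁ : Cinf f₁) (h₂ : Cinf f₂) : Cinf (ktwo f₁ f₂) := by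
  convert h₁.evenPart.lin h₂.evenPart 1 (-1) using 2
  simp only [_root_.ktwo]; ring

lemma cconst_eq (α β : ℝ) (f₁ f₂ : ℝ → ℝ) : cconst α β f₁ f₂ = Afun α β f₁ f₂ 0 := by
  simp [cconst, Afun, resolv, Kfun]

lemma Pone_eq {α β : ℝ} (hγ : 0 < gam α β) {f₁ f₂ : ℝ → ℝ} (h₁ : Cinf f₁) (h₂ : Cinf f₂) (x : ℝ) :
    Pone α β f₁ f₂ x = evenPart f₁ x - (Afun α β f₁ f₂ x + Afun α β f₁ f₂ (-x)) / 2 +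
      α * ((Afun α β f₁ f₂ x - Afun α β f₁ f₂ (-x)) / gam α β) := by
  have hu := h₁.kone h₂ α β
  have hv := h₁.ktwo h₂
  have hA1 : Afun α β f₁ f₂ x = _ := resolv_eq hγ (hu.lin hv 1 (gam α β / 2)) x
  have hA2 : Afun α β f₁ f₂ (-x) = _ :=
    resolv_neg hγ hu hv (kone_neg α β f₁ f₂) (ktwo_neg f₁ f₂) x
  rw [show resolv (gam α β) (fun x => 1 * kone α β f₁ f₂ x + gam α β / 2 * ktwo f₁ f₂ x) 0 =
    Afun α β f₁ f₂ 0 from rfl] at hA1 hA2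
  have hc1 := hu.1
  have hc2 := hv.1
  -- Put the convolution kernels into the shape `a k₁ + b k₂`, so that all integrals split.
  have s1 : (fun y => 2 * α / gam α β * kone α β f₁ f₂ y - gam α β / 2 * ktwo f₁ f₂ y) =
      fun y => 2 * α / gam α β * kone α β f₁ f₂ y + (-(gam α β / 2)) * ktwo f₁ f₂ y := by
    funext y; ring
  have s2 : (fun y => kone α β f₁ f₂ y - α * ktwo f₁ f₂ y) =
      fun y => 1 * kone α β f₁ f₂ y + (-α) * ktwo f₁ f₂ y := by
    funext y; ring
  rw [hA1, hA2, Pone, cconst_eq, Real.sinh_eq, Real.cosh_eq, s1, s2,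
    conv_sinh _ (by fun_prop), conv_cosh _ (by fun_prop)]
  simp only [integral_lin (e := fun y => Real.exp (-(gam α β * y))) (by fun_prop) hc1 hc2,
    integral_lin (e := fun y => Real.exp (gam α β * y)) (by fun_prop) hc1 hc2]
  field_simp
  ring

lemma Cinf_Afun {α β : ℝ} (hγ : 0 < gam α β) {f₁ f₂ : ℝ → ℝ} (h₁ : Cinf f₁) (h₂ : Cinf f₂) :
    Cinf (Afun α β f₁ f₂) :=
  Cinf.resolv hγ ((h₁.kone h₂ α β).lin (h₁.ktwo h₂) _ _)

lemma Ptwo_eq {α β : ℝ} (hγ : 0 < gam α β) {f₁ f₂ : ℝ → ℝ} (h₁ : Cinf f₁) (h₂ : Cinf f₂) (x : ℝ) :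
    Ptwo α β f₁ f₂ x = evenPart f₂ x + (Afun α β f₁ f₂ x + Afun α β f₁ f₂ (-x)) / 2 +
      β * ((Afun α β f₁ f₂ x - Afun α β f₁ f₂ (-x)) / gam α β) := by
  have hu := h₁.kone h₂ α β
  have hv := h₁.ktwo h₂
  have hA1 : Afun α β f₁ f₂ x = _ := resolv_eq hγ (hu.lin hv 1 (gam α β / 2)) x
  have hA2 : Afun α β f₁ f₂ (-x) = _ :=
    resolv_neg hγ hu hv (kone_neg α β f₁ f₂) (ktwo_neg f₁ f₂) x
  rw [show resolv (gam α β) (fun x => 1 * kone α β f₁ f₂ x + gam α β / 2 * ktwo f₁ f₂ x) 0 =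
    Afun α β f₁ f₂ 0 from rfl] at hA1 hA2
  have hc1 := hu.1
  have hc2 := hv.1
  -- Put the convolution kernels into the shape `a k₁ + b k₂`, so that all integrals split.
  have s1 : (fun y => 2 * β / gam α β * kone α β f₁ f₂ y + gam α β / 2 * ktwo f₁ f₂ y) =
      fun y => 2 * β / gam α β * kone α β f₁ f₂ y + (gam α β / 2) * ktwo f₁ f₂ y := by
    funext y; ring
  have s2 : (fun y => kone α β f₁ f₂ y + β * ktwo f₁ f₂ y) =
      fun y => 1 * kone α β f₁ f₂ y + β * ktwo f₁ f₂ y := by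
    funext y; ring
  rw [hA1, hA2, Ptwo, cconst_eq, Real.sinh_eq, Real.cosh_eq, s1, s2,
    conv_sinh _ (by fun_prop), conv_cosh _ (by fun_prop)]
  simp only [integral_lin (e := fun y => Real.exp (-(gam α β * y))) (by fun_prop) hc1 hc2,
    integral_lin (e := fun y => Real.exp (gam α β * y)) (by fun_prop) hc1 hc2]
  field_simp
  ring

/-- Variation of constants: a solution of `D' + a D = φ` with `D 0 = 0` is `e_a * φ`. -/
lemma conv_expa (a : ℝ) {D φ : ℝ → ℝ} (hφ : Continuous φ) (h0 : D 0 = 0)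
    (hD : ∀ x, HasDerivAt D (φ x - a * D x) x) (x : ℝ) : conv (expa a) φ x = D x := by
  have h : ∀ y ∈ uIcc 0 x, HasDerivAt (fun y => Real.exp (-(a * (x - y))) * D y)
      (expa a (x - y) * φ y) y := fun y _ => by
    have h2 : HasDerivAt (fun y => Real.exp (-(a * (x - y))))
        (Real.exp (-(a * (x - y))) * a) y := by
      simpa using (((hasDerivAt_id y).const_sub x).const_mul a).neg.exp
    refine (h2.mul (hD y)).congr_deriv ?_
    simp only [expa]; ring
  rw [conv, intervalIntegral.integral_eq_sub_of_hasDerivAt h]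
  · simp [h0]
  · exact Continuous.intervalIntegrable (by unfold expa; fun_prop) _ _

/-- `P_{α,β}` maps `𝒞` into `𝒞_{α,β}`. -/
theorem statement6 (α β : ℝ) (hα : 0 ≤ α) (hβ : 0 ≤ β) (hαβ : 0 < α + β)
    (f₁ f₂ : ℝ → ℝ) (h₁ : Cinf f₁) (h₂ : Cinf f₂) :
    memCab α β (Pone α β f₁ f₂) (Ptwo α β f₁ f₂) := by
  have hγ : 0 < gam α β := Real.sqrt_pos.2 (by nlinarith [sq_nonneg (α - β)])
  set A := Afun α β f₁ f₂ with hAdef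
  have hA : Cinf A := Cinf_Afun hγ h₁ h₂
  have e1 : ∀ x, Pone α β f₁ f₂ x = _ := Pone_eq hγ h₁ h₂
  have e2 : ∀ x, Ptwo α β f₁ f₂ x = _ := Ptwo_eq hγ h₁ h₂
  have c1 : Cinf (Pone α β f₁ f₂) := by
    convert (h₁.evenPart.lin hA.evenPart 1 (-1)).lin hA.oddPart 1 (2 * α / gam α β) using 2 with x
    rw [e1]; simp only [evenPart, oddPart, A]; ring
  have c2 : Cinf (Ptwo α β f₁ f₂) := by
    convert (h₂.evenPart.lin hA.evenPart 1 1).lin hA.oddPart 1 (2 * β / gam α β) using 2 with x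
    rw [e2]; simp only [evenPart, oddPart, A]; ring
  have key : ∀ x, conv (expa (α + β)) (fun y => Ptwo α β f₁ f₂ y - Pone α β f₁ f₂ (-y)) x =
      (A x - A (-x)) / gam α β := by
    have hd : ∀ x, HasDerivAt A (gam α β * A x - Kfun α β f₁ f₂ x) x :=
      hasDerivAt_resolv hγ ((h₁.kone h₂ α β).lin (h₁.ktwo h₂) _ _)
    refine fun x => conv_expa (D := fun x => (A x - A (-x)) / gam α β) (α + β)
      (c2.1.sub c1.neg_comp.1) (by simp) (fun x => ?_) x
    refine (((hd x).sub
      ((hd (-x)).comp x (hasDerivAt_neg x))).div_const (gam α β)).congr_deriv ?_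
    rw [Pi.sub_apply, e1, e2]
    simp only [A, Kfun, kone_neg, ktwo_neg, ktwo, evenPart, neg_neg]
    field_simp
    ring
  refine ⟨c1, c2, fun x => ?_, fun x => ?_⟩
  · rw [key, oddPart, e1, e1]; simp only [evenPart, neg_neg, A]; ring
  · rw [key, oddPart, e2, e2]; simp only [evenPart, neg_neg, A]; ring
end
end

section
/- Let a > 0 and define 𝖣_a := {(φ₁,φ₂) ∈ 𝒞 : (a/2)·φ₁^e = a·(e_a * φ₂) + φ₂(0)·e_a = φ₂^e identically on ℝ} and 𝖣_a^♯ := {(φ₁,φ₂) ∈ 𝒞 : φ₁^e = a·(e_a * φ₁) + φ₁(0)·e_a identically on ℝ, and φ₂^e = 0}. Then both 𝖣_a and 𝖣_a^♯ are invariant under the basic Cartesian product cosine family: for every t ∈ ℝ, C_D(t) maps 𝖣_a into 𝖣_a and 𝖣_a^♯ into 𝖣_a^♯. -/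
/-!
For continuous `f`, the identity `f^e = a (e_a * f) + f(0) e_a` is equivalent to the differential
relation `(f^e)' = a f^o` on all of `ℝ`: its right-hand side is the unique solution `g` of
`g' = a (f - g)`, `g 0 = f 0`, and `f - f^e = f^o`, `f^e 0 = f 0`
(`evenPart_eq_conv_iff_hasDerivAt`). The operator `C(t)` commutes with taking even parts, odd parts
and derivatives, hence preserves the differential relation (`evenPart_eq_conv_cosF`). The remaining
conditions, `(a/2) φ₁^e = φ₂^e` and `φ₂^e = 0`, are preserved because `C(t)` is linear and commutes
with even parts.
-/

open Filter Topology MeasureTheory Set intervalIntegral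

noncomputable section

theorem Cinf.cosF {f : ℝ → ℝ} (hf : Cinf f) (t : ℝ) : Cinf (cosF t f) := by
  obtain ⟨hc, ⟨L, hL⟩, ⟨M, hM⟩⟩ := hf
  refine ⟨?_, ⟨(L + L) / 2, ?_⟩, ⟨(M + M) / 2, ?_⟩⟩
  · unfold _root_.cosF
    fun_prop
  · exact ((hL.comp (tendsto_atTop_add_const_right _ t tendsto_id)).add
      (hL.comp (tendsto_atTop_add_const_right _ (-t) tendsto_id))).div_const 2
  · exact ((hM.comp (tendsto_atBot_add_const_right _ t tendsto_id)).add
      (hM.comp (tendsto_atBot_add_const_right _ (-t) tendsto_id))).div_const 2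

theorem evenPart_cosF (t : ℝ) (f : ℝ → ℝ) : evenPart (cosF t f) = cosF t (evenPart f) := by
  funext x
  have h1 : -(x + t) = -x - t := by ring
  have h2 : -(x - t) = -x + t := by ring
  simp only [evenPart, cosF, h1, h2]
  ring

theorem oddPart_cosF (t : ℝ) (f : ℝ → ℝ) : oddPart (cosF t f) = cosF t (oddPart f) := by
  funext x
  have h1 : -(x + t) = -x - t := by ring
  have h2 : -(x - t) = -x + t := by ring
  simp only [oddPart, cosF, h1, h2]
  ring

theorem conv_expa_s10 (a : ℝ) (f : ℝ → ℝ) (x : ℝ) :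
    conv (expa a) f x = Real.exp (-(a * x)) * ∫ y in (0:ℝ)..x, Real.exp (a * y) * f y := by
  unfold conv expa
  rw [← intervalIntegral.integral_const_mul]
  congr 1
  funext y
  rw [← mul_assoc, ← Real.exp_add]
  congr 2
  ring

theorem hasDerivAt_exp_const_mul (b x : ℝ) :
    HasDerivAt (fun y => Real.exp (b * y)) (Real.exp (b * x) * b) x := by
  simpa using ((hasDerivAt_id x).const_mul b).exp

/-- The integral identity defining the subspaces is the integrated form of `(f^e)' = a f^o`. -/
theorem evenPart_eq_conv_iff_hasDerivAt (a : ℝ) {f : ℝ → ℝ} (hf : Continuous f) :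
    (∀ x, evenPart f x = a * conv (expa a) f x + f 0 * expa a x) ↔
      ∀ x, HasDerivAt (evenPart f) (a * oddPart f x) x := by
  have hcont : Continuous fun y => Real.exp (a * y) * f y := by fun_prop
  have hodd : ∀ x, oddPart f x = f x - evenPart f x := by
    intro x
    simp only [oddPart, evenPart]
    ring
  have hexp : ∀ x, Real.exp (-(a * x)) * Real.exp (a * x) = 1 := by
    intro x
    rw [← Real.exp_add, neg_add_cancel, Real.exp_zero]
  constructor
  · intro h x
    have hfun : evenPart f = fun x => Real.exp (-a * x) *
        (a * (∫ y in (0:ℝ)..x, Real.exp (a * y) * f y) + f 0) := by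
      funext z
      rw [h z, conv_expa_s10, expa, neg_mul]
      ring
    have hint := (hcont.integral_hasStrictDerivAt 0 x).hasDerivAt
    have hd := (hasDerivAt_exp_const_mul (-a) x).mul ((hint.const_mul a).add_const (f 0))
    have hx := congrFun hfun x
    rw [hodd, hx, hfun]
    refine hd.congr_deriv ?_
    have := hexp x
    simp only [neg_mul]
    linear_combination (a * f x) * this
  · intro h x
    -- `e^{ay} f^e(y)` is a primitive of `a e^{ay} f(y)`.
    have hd : ∀ y, HasDerivAt (fun z => Real.exp (a * z) * evenPart f z)
        (a * (Real.exp (a * y) * f y)) y := by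
      intro y
      refine ((hasDerivAt_exp_const_mul a y).mul (h y)).congr_deriv ?_
      rw [hodd]
      ring
    have hI := intervalIntegral.integral_eq_sub_of_hasDerivAt (a := 0) (b := x)
      (fun y _ => hd y) ((continuous_const.mul hcont).intervalIntegrable 0 x)
    have h0 : evenPart f 0 = f 0 := by simp [evenPart]
    rw [intervalIntegral.integral_const_mul, mul_zero, Real.exp_zero, one_mul, h0] at hI
    rw [conv_expa_s10, expa]
    linear_combination (-Real.exp (-(a * x))) * hI - evenPart f x * hexp x

theorem evenPart_eq_conv_cosF (a t : ℝ) {f : ℝ → ℝ} (hf : Cinf f)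
    (h : ∀ x, evenPart f x = a * conv (expa a) f x + f 0 * expa a x) (x : ℝ) :
    evenPart (cosF t f) x = a * conv (expa a) (cosF t f) x + cosF t f 0 * expa a x := by
  rw [evenPart_eq_conv_iff_hasDerivAt a hf.1] at h
  refine (evenPart_eq_conv_iff_hasDerivAt a (hf.cosF t).1).2 (fun x => ?_) x
  rw [evenPart_cosF, oddPart_cosF]
  refine ((((h (x + t)).comp_add_const x t).add
    ((h (x - t)).comp_sub_const x t)).div_const 2).congr_deriv ?_
  simp only [cosF]
  ring

/-- the subspaces `𝖣_a` and `𝖣_a♯` are invariant under the basic Cartesian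
product cosine family. -/
theorem statement10 (a : ℝ) (ha : 0 < a) (t : ℝ) :
    (∀ φ₁ φ₂ : ℝ → ℝ, Cinf φ₁ → Cinf φ₂ →
      (∀ x, (a / 2) * evenPart φ₁ x = a * conv (expa a) φ₂ x + φ₂ 0 * expa a x) →
      (∀ x, evenPart φ₂ x = a * conv (expa a) φ₂ x + φ₂ 0 * expa a x) →
      Cinf (cosF t φ₁) ∧ Cinf (cosF t φ₂) ∧
      (∀ x, (a / 2) * evenPart (cosF t φ₁) x =
        a * conv (expa a) (cosF t φ₂) x + (cosF t φ₂) 0 * expa a x) ∧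
      (∀ x, evenPart (cosF t φ₂) x =
        a * conv (expa a) (cosF t φ₂) x + (cosF t φ₂) 0 * expa a x)) ∧
    (∀ φ₁ φ₂ : ℝ → ℝ, Cinf φ₁ → Cinf φ₂ →
      (∀ x, evenPart φ₁ x = a * conv (expa a) φ₁ x + φ₁ 0 * expa a x) →
      (∀ x, evenPart φ₂ x = 0) →
      Cinf (cosF t φ₁) ∧ Cinf (cosF t φ₂) ∧
      (∀ x, evenPart (cosF t φ₁) x =
        a * conv (expa a) (cosF t φ₁) x + (cosF t φ₁) 0 * expa a x) ∧
      (∀ x, evenPart (cosF t φ₂) x = 0)) := by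
  refine ⟨fun φ₁ φ₂ h₁ h₂ e₁ e₂ => ?_, fun φ₁ φ₂ h₁ h₂ e₁ e₂ => ?_⟩
  · have key := evenPart_eq_conv_cosF a t h₂ e₂
    refine ⟨h₁.cosF t, h₂.cosF t, fun x => ?_, key⟩
    have e : ∀ y, (a / 2) * evenPart φ₁ y = evenPart φ₂ y := fun y => (e₁ y).trans (e₂ y).symm
    rw [← key x, evenPart_cosF, evenPart_cosF]
    simp only [cosF]
    linear_combination (e (x + t) + e (x - t)) / 2
  · refine ⟨h₁.cosF t, h₂.cosF t, evenPart_eq_conv_cosF a t h₁ e₁, fun x => ?_⟩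
    rw [evenPart_cosF]
    simp [cosF, e₂]
end
end
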